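/- Let A be a ℂ-vector space and let ι : T(T_+(A)) → H_S(A) be the algebra morphism defined on words by ι(a_1⋯a_n) = Σ_{t∈ST(n)} t ⊗ a_1⋯a_n. Then ι is a coalgebra morphism, i.e., δ_A ∘ ι = (ι ⊗ ι) ∘ Δ and ε_A ∘ ι = ε; moreover ι intertwines the half-coproducts: δ_{≺,A} ∘ ι = (ι ⊗ ι) ∘ Δ_≺ and δ_{≻,A} ∘ ι = (ι ⊗ ι) ∘ Δ_≻ on the augmentation ideal. -/

import Mathlib

open scoped BigOperators

/-- Planar rooted trees (rose trees). -/
inductive PTree : Type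
  | node : List PTree → PTree

namespace PTree

/-- The single-vertex tree (a leaf). -/
abbrev leaf : PTree := .node []

/-- Subtree at a given path from the root (entries select children). -/
def subtreeAt : List ℕ → PTree → Option PTree
  | [], t => some t
  | i :: p, node cs => (cs[i]?).bind (subtreeAt p)

/-- `p` is (the path of) a vertex of `t`. -/
def IsVertex (t : PTree) (p : List ℕ) : Prop := (subtreeAt p t).isSome

/-- `p` is a leaf of `t`. -/
def IsLeafAt (t : PTree) (p : List ℕ) : Prop := subtreeAt p t = some leaf

/-- `p` is an internal (non-leaf) vertex of `t`. -/
def IsInternalAt (t : PTree) (p : List ℕ) : Prop :=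
  ∃ cs, subtreeAt p t = some (node cs) ∧ cs ≠ []

/-- Schröder trees: every internal vertex has at least two children. -/
inductive IsSchroder : PTree → Prop
  | leaf : IsSchroder (node [])
  | node (cs : List PTree) : 2 ≤ cs.length → (∀ c ∈ cs, IsSchroder c) → IsSchroder (node cs)

/-- Number of leaves of a tree. -/
noncomputable def numLeaves (t : PTree) : ℕ := Nat.card {p : List ℕ // IsLeafAt t p}

/-- Number of sectors between consecutive leaves. -/
noncomputable def numSectors (t : PTree) : ℕ := numLeaves t - 1

/-- Number of internal vertices. -/
noncomputable def numInternal (t : PTree) : ℕ := Nat.card {p : List ℕ // IsInternalAt t p}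

/-- The set of Schröder trees with `n+1` leaves. -/
def ST (n : ℕ) : Set PTree := {t | IsSchroder t ∧ numLeaves t = n + 1}

/-- Number of surjective strictly order-preserving maps from the poset of internal
vertices of `t` (i.e. the vertex poset of the skeleton `sk(t)`, with the root minimal,
the order being the ancestor/prefix order) onto `{1, …, k}`. This is `ω_k(sk(t))`. -/
noncomputable def omegaSkK (t : PTree) (k : ℕ) : ℕ :=
  Nat.card {f : {p : List ℕ // IsInternalAt t p} → Fin k //
    Function.Surjective f ∧ ∀ v w, v.1 <+: w.1 → v ≠ w → f v < f w}

/-- The Murua coefficient `ω(sk(t))` of the skeleton of `t`. -/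
noncomputable def omegaSk (t : PTree) : ℂ :=
  ∑ k ∈ Finset.Icc 1 (numInternal t), ((-1 : ℂ) ^ (k + 1) / (k : ℂ)) * (omegaSkK t k : ℂ)

/-- The subtree of `t` at path `p` (junk value: a leaf). -/
noncomputable def subtree! (t : PTree) (p : List ℕ) : PTree := (subtreeAt p t).getD leaf

/-- Number of leaves of `t` strictly to the left of the subtree at `p`. -/
noncomputable def leavesBefore (t : PTree) (p : List ℕ) : ℕ :=
  Nat.card {q : List ℕ // IsLeafAt t q ∧ List.Lex (· < ·) q p ∧ ¬ p <+: q}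

/-- Sector number `i` (0-indexed: the sector between the `(i+1)`-st and `(i+2)`-nd leaves of `t`)
lies strictly inside the subtree of `t` rooted at `p`. -/
def SectorIn (t : PTree) (p : List ℕ) (i : ℕ) : Prop :=
  leavesBefore t p ≤ i ∧ i + 2 ≤ leavesBefore t p + numLeaves (subtree! t p)

/-- The internal vertex `v` of `t` owns sector `i`: the sector lies in the corolla at `v`,
i.e. inside the subtree at `v` but not inside the subtree at any strictly deeper vertex. -/
def OwnsSector (t : PTree) (v : List ℕ) (i : ℕ) : Prop :=
  IsInternalAt t v ∧ SectorIn t v i ∧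
    ∀ w, IsInternalAt t w → v <+: w → w ≠ v → ¬ SectorIn t w i

/-- Sectors `i` and `j` belong to the same block of the noncrossing partition `π(t)`. -/
def SameOwner (t : PTree) (i j : ℕ) : Prop := ∃ v, OwnsSector t v i ∧ OwnsSector t v j

open Classical in
/-- `φ_{π(t)}(a_1,…,a_n)`: the product over the blocks of the noncrossing partition `π(t)`
(one block per internal vertex `v`, consisting of the sectors owned by `v`) of `φ` applied to
the ordered product of the corresponding letters of `w`. -/
noncomputable def phiPi {A : Type*} [Ring A] (φ : A → ℂ) (t : PTree) (w : List A) : ℂ :=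
  ∏ᶠ v ∈ {v : List ℕ | IsInternalAt t v},
    φ ((((List.range w.length).filter fun i => OwnsSector t v i).map fun i => w.getD i 0).prod)

/-- A corolla: a root whose (at least two) children are all leaves. -/
def corolla (m : ℕ) : PTree := node (List.replicate m leaf)

/-- `t` is a corolla. -/
def IsCorolla (t : PTree) : Prop := ∃ m, 2 ≤ m ∧ t = corolla m

/-- Graft a tree `s` onto the leftmost leaf of `t`. -/
def graftLeftmost : PTree → PTree → PTree
  | node [], s => s
  | node (c :: cs), s => node (graftLeftmost c s :: cs)

/-- Trees obtained from the single-vertex tree by repeatedly grafting a corolla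
onto the leftmost leaf. -/
inductive IsBST : PTree → Prop
  | single : IsBST leaf
  | graft (t : PTree) (m : ℕ) : IsBST t → 2 ≤ m → IsBST (graftLeftmost t (corolla m))

/-- Schröder trees whose leftmost child of the root is a leaf. -/
def IsPST (t : PTree) : Prop := ∃ cs, t = node (leaf :: cs)

end PTree
namespace PTree

mutual
  /-- List of all vertex paths of a tree. -/
  def verticesList : PTree → List (List ℕ)
    | .node cs => [] :: verticesListAux 0 cs
  def verticesListAux : ℕ → List PTree → List (List ℕ)
    | _, [] => []
    | i, c :: cs => (verticesList c).map (i :: ·) ++ verticesListAux (i + 1) cs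
end

open Classical in
/-- The `Finset` of internal vertices of `t`. -/
noncomputable def internalFinset (t : PTree) : Finset (List ℕ) :=
  ((verticesList t).filter fun p => decide (IsInternalAt t p)).toFinset

open Classical in
/-- The admissible cuts of a Schröder tree `t`: sets of internal vertices such that every
path from the root to a leaf contains at most one of them (equivalently, antichains for
the ancestor/prefix order). -/
noncomputable def cutsFinset (t : PTree) : Finset (Finset (List ℕ)) :=
  (internalFinset t).powerset.filter fun c => ∀ v ∈ c, ∀ w ∈ c, v ≠ w → ¬ v <+: w

/-- A vertex path lies on the leftmost branch iff it consists of zeros. -/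
def OnLeftBranch (v : List ℕ) : Prop := v = List.replicate v.length 0

open Classical in
/-- `Adm_≺(t)`: admissible cuts whose trunk contains the leftmost leaf of `t`,
i.e. cuts containing no vertex of the leftmost branch. -/
noncomputable def cutsPrecFinset (t : PTree) : Finset (Finset (List ℕ)) :=
  (cutsFinset t).filter fun c => ∀ v ∈ c, ¬ OnLeftBranch v

open Classical in
/-- `Adm(t) \ Adm_≺(t)`: the admissible cuts containing a vertex of the leftmost branch. -/
noncomputable def cutsSuccFinset (t : PTree) : Finset (Finset (List ℕ)) :=
  (cutsFinset t).filter fun c => ∃ v ∈ c, OnLeftBranch v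

/-- Replace the subtree at a given path by a leaf. -/
def replaceLeaf : List ℕ → PTree → PTree
  | [], _ => leaf
  | i :: p, node cs => node (cs.set i (replaceLeaf p (cs.getD i leaf)))

/-- The vertices of a cut, sorted from left to right. -/
noncomputable def sortCut (t : PTree) (c : Finset (List ℕ)) : List (List ℕ) :=
  c.toList.mergeSort fun v w => Nat.ble (leavesBefore t v) (leavesBefore t w)

/-- The trunk `R_c(t)`: replace the subtree at each vertex of the cut by a leaf. -/
noncomputable def trunkTree (t : PTree) (c : Finset (List ℕ)) : PTree :=
  (sortCut t c).foldl (fun s v => replaceLeaf v s) t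

open Classical in
/-- Sector `i` of `t` is removed by the cut `c` (it lies in one of the pruned subtrees). -/
noncomputable def RemovedIdx (t : PTree) (c : Finset (List ℕ)) (i : ℕ) : Prop :=
  ∃ v ∈ c, leavesBefore t v ≤ i ∧ i < leavesBefore t v + numSectors (subtree! t v)

/-- A decorated forest: a list of Schröder trees, each `t` decorated by a word of length
`numSectors t` labelling the sectors between consecutive leaves from left to right. -/
abbrev DForest (A : Type*) := List (PTree × List A)

/-- A genuine decorated tree: a non-unit Schröder tree with matching decoration. -/
def GoodTree {A : Type*} (d : PTree × List A) : Prop :=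
  IsSchroder d.1 ∧ d.1 ≠ leaf ∧ d.2.length = numSectors d.1

/-- A genuine decorated forest. -/
def GoodForest {A : Type*} (F : DForest A) : Prop := ∀ d ∈ F, GoodTree d

open Classical in
/-- The decoration of the trunk `R_c(t ⊗ w)`: the letters of `w` at the sectors
not removed by the cut, in their original order. -/
noncomputable def trunkWord {A : Type*} [Zero A] (t : PTree) (c : Finset (List ℕ))
    (w : List A) : List A :=
  (((List.range w.length).filter fun i => decide (¬ RemovedIdx t c i)).map fun i => w.getD i 0)

open Classical in
/-- The trunk `R_c(t ⊗ w)` as a decorated forest (empty if the trunk is the unit,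
i.e. the single-leaf tree, which is identified with `1`). -/
noncomputable def trunkPart {A : Type*} [Zero A] (d : PTree × List A)
    (c : Finset (List ℕ)) : DForest A :=
  if trunkTree d.1 c = leaf then [] else [(trunkTree d.1 c, trunkWord d.1 c d.2)]

/-- The pruning `P_c(t ⊗ w)`: the ordered forest of decorated subtrees rooted at the
vertices of the cut (left to right), each carrying the contiguous subword of `w`
decorating its sectors. -/
noncomputable def prunePart {A : Type*} (d : PTree × List A)
    (c : Finset (List ℕ)) : DForest A :=
  (sortCut d.1 c).map fun v =>
    (subtree! d.1 v, (d.2.drop (leavesBefore d.1 v)).take (numSectors (subtree! d.1 v)))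

/-- All splittings `R_c(F) ⊗ P_c(F)` of a decorated forest given by tuples of admissible
cuts (one cut per tree): the combinatorial coproduct `δ_A`. -/
noncomputable def forestSplits {A : Type*} [Zero A] :
    DForest A → List (DForest A × DForest A)
  | [] => [([], [])]
  | d :: ds => (cutsFinset d.1).toList.flatMap fun c =>
      (forestSplits ds).map fun pr => (trunkPart d c ++ pr.1, prunePart d c ++ pr.2)

/-- The splittings appearing in `δ_{≺,A}`: the first tree is cut along `Adm_≺`, the
remaining ones along all admissible cuts. -/
noncomputable def forestSplitsPrec {A : Type*} [Zero A] :
    DForest A → List (DForest A × DForest A)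
  | [] => []
  | d :: ds => (cutsPrecFinset d.1).toList.flatMap fun c =>
      (forestSplits ds).map fun pr => (trunkPart d c ++ pr.1, prunePart d c ++ pr.2)

/-- The splittings appearing in `δ_{≻,A} = δ_A − δ_{≺,A}`. -/
noncomputable def forestSplitsSucc {A : Type*} [Zero A] :
    DForest A → List (DForest A × DForest A)
  | [] => []
  | d :: ds => (cutsSuccFinset d.1).toList.flatMap fun c =>
      (forestSplits ds).map fun pr => (trunkPart d c ++ pr.1, prunePart d c ++ pr.2)

/-- The convolution product `f * g = m_ℂ ∘ (f ⊗ g) ∘ δ_A` of linear functionals on the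
Hopf algebra `H_S(A)` of decorated Schröder trees (described on the basis of decorated
forests). -/
noncomputable def convD {A : Type*} [Zero A] (f g : DForest A → ℂ) : DForest A → ℂ :=
  fun F => ((forestSplits F).map fun pr => f pr.1 * g pr.2).sum

/-- The left half-shuffle product `f ≺̃ g = m_ℂ ∘ (f ⊗ g) ∘ δ_{≺,A}`. -/
noncomputable def precD {A : Type*} [Zero A] (f g : DForest A → ℂ) : DForest A → ℂ :=
  fun F => ((forestSplitsPrec F).map fun pr => f pr.1 * g pr.2).sum

/-- The right half-shuffle product `f ≻̃ g = m_ℂ ∘ (f ⊗ g) ∘ δ_{≻,A}`. -/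
noncomputable def succD {A : Type*} [Zero A] (f g : DForest A → ℂ) : DForest A → ℂ :=
  fun F => ((forestSplitsSucc F).map fun pr => f pr.1 * g pr.2).sum

open Classical in
/-- The counit `ε_A` of `H_S(A)` as a functional. -/
noncomputable def epsD {A : Type*} : DForest A → ℂ := fun F => if F = [] then 1 else 0

open Classical in
/-- The character `Φ̃ : H_S(A) → ℂ` extending `φ`: it sends a decorated tree `t ⊗ w` to
`φ(a_1 ⋯ a_n)` if `t` is a corolla and to `0` otherwise, multiplicatively on forests. -/
noncomputable def charD {A : Type*} [Ring A] (φ : A → ℂ) : DForest A → ℂ :=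
  fun F => (F.map fun d => if IsCorolla d.1 then φ d.2.prod else 0).prod

/-- `Φ̂ = Φ̃ − ε_A`. -/
noncomputable def charHatD {A : Type*} [Ring A] (φ : A → ℂ) : DForest A → ℂ :=
  fun F => charD φ F - epsD F

/-- Convolution powers `f^{*k}` (with `f^{*0} = ε_A`). -/
noncomputable def convPowD {A : Type*} [Zero A] (f : DForest A → ℂ) : ℕ → DForest A → ℂ
  | 0 => epsD
  | k + 1 => convD f (convPowD f k)

/-- Left half-shuffle powers `α^{≺̃ k}`, with `α^{≺̃ 0} = ε_A` and
`α^{≺̃ k} = α ≺̃ α^{≺̃ (k−1)}`. -/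
noncomputable def precPowD {A : Type*} [Zero A] (α : DForest A → ℂ) : ℕ → DForest A → ℂ
  | 0 => epsD
  | k + 1 => precD α (precPowD α k)

/-- Right half-shuffle powers `α^{≻̃ k}`, with `α^{≻̃ 0} = ε_A` and
`α^{≻̃ k} = α^{≻̃ (k−1)} ≻̃ α`. -/
noncomputable def succPowD {A : Type*} [Zero A] (α : DForest A → ℂ) : ℕ → DForest A → ℂ
  | 0 => epsD
  | k + 1 => succD (succPowD α k) α

/-- The left half-shuffle exponential `E_≺̃(α) = Σ_{k ≥ 0} α^{≺̃ k}`. -/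
noncomputable def ePrecD {A : Type*} [Zero A] (α : DForest A → ℂ) : DForest A → ℂ :=
  fun F => ∑ᶠ k : ℕ, precPowD α k F

/-- The right half-shuffle exponential `E_≻̃(α) = Σ_{k ≥ 0} α^{≻̃ k}`. -/
noncomputable def eSuccD {A : Type*} [Zero A] (α : DForest A → ℂ) : DForest A → ℂ :=
  fun F => ∑ᶠ k : ℕ, succPowD α k F

/-- The convolution exponential `exp^*(α) = Σ_{k ≥ 0} α^{*k} / k!`. -/
noncomputable def expStarD {A : Type*} [Zero A] (α : DForest A → ℂ) : DForest A → ℂ :=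
  fun F => ∑ᶠ k : ℕ, ((k.factorial : ℂ))⁻¹ * convPowD α k F

/-- The convolution logarithm `log^*(Φ̃) = Σ_{k ≥ 1} ((−1)^{k+1}/k) (Φ̃ − ε_A)^{*k}`. -/
noncomputable def logStarD {A : Type*} [Ring A] (φ : A → ℂ) : DForest A → ℂ :=
  fun F => ∑ᶠ k ∈ Set.Ici (1 : ℕ), ((-1 : ℂ) ^ (k + 1) / (k : ℂ)) * convPowD (charHatD φ) k F

/-- An infinitesimal character of `H_S(A)`: it vanishes on the unit (empty forest) and on
products of two or more nonempty forests. -/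
def IsInfCharD {A : Type*} (α : DForest A → ℂ) : Prop :=
  α [] = 0 ∧ ∀ F G : DForest A, F ≠ [] → G ≠ [] → α (F ++ G) = 0

end PTree
section DoubleTensorAlgebra

open scoped TensorProduct DirectSum
open PiTensorProduct

variable (A : Type*) [AddCommGroup A] [Module ℂ A]

/-- `T_+(A) = ⊕_{n ≥ 1} A^{⊗n}` (indexed by `n = m + 1`). -/
abbrev TPlus := ⨁ (m : ℕ), (⨂[ℂ] (_ : Fin (m + 1)), A)

/-- The double tensor algebra `T(T_+(A))`, with the bar product as multiplication. -/
abbrev TT := TensorAlgebra ℂ (TPlus A)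

variable {A}

/-- The element `a_1 ⋯ a_n ∈ A^{⊗n} ⊆ T_+(A) ⊆ T(T_+(A))` determined by a word
(the unit `1` for the empty word). -/
noncomputable def wordOf : List A → TT A
  | [] => 1
  | x :: xs =>
      (TensorAlgebra.ι ℂ)
        (DirectSum.of (fun m => ⨂[ℂ] (_ : Fin (m + 1)), A) xs.length
          (PiTensorProduct.tprod ℂ (x :: xs).get))

/-- The bar product `w_1 | ⋯ | w_m ∈ T(T_+(A))` of a list of words. -/
noncomputable def sentenceOf (ws : List (List A)) : TT A := (ws.map wordOf).prod

/-- Group a list of natural numbers into maximal runs of consecutive integers. -/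
def natRunsT : List ℕ → List (List ℕ)
  | [] => []
  | x :: xs =>
    match natRunsT xs with
    | (y :: ys) :: rest => if x + 1 = y then (x :: y :: ys) :: rest else [x] :: (y :: ys) :: rest
    | _ => [[x]]

/-- The subword `a_S` of the word `l` (as an element of `T(T_+(A))`; `a_∅ = 1`). -/
noncomputable def subwordElem (l : List A) (S : Finset (Fin l.length)) : TT A :=
  wordOf ((S.sort (· ≤ ·)).map l.get)

/-- The element `a_{J^S_{[n]}} = a_{J_1} | ⋯ | a_{J_r}`, the bar product of the subwords of
`l` over the maximal intervals `J_1, …, J_r` of the complement of `S` (ordered by their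
minima). -/
noncomputable def compElem (l : List A) (S : Finset (Fin l.length)) : TT A :=
  sentenceOf ((natRunsT ((((Finset.univ : Finset (Fin l.length)) \ S).sort (· ≤ ·)).map
    Fin.val)).map fun r => r.map fun i => l.getD i 0)

variable (A)

/-- The `n`-th piece of the weight grading of `T(T_+(A))`: the span of the bar products of
words with `n` letters in total. -/
noncomputable def ttGrade (n : ℕ) : Submodule ℂ (TT A) :=
  Submodule.span ℂ {x : TT A | ∃ ws : List (List A),
    (∀ w ∈ ws, w ≠ []) ∧ (ws.map List.length).sum = n ∧ x = sentenceOf ws}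

/-- The span of the elementary tensors `x ⊗ y` with `x` of weight `i` and `y` of weight
`j`. -/
noncomputable def ttGradePair (i j : ℕ) : Submodule ℂ (TT A ⊗[ℂ] TT A) :=
  Submodule.span ℂ {z : TT A ⊗[ℂ] TT A |
    ∃ x ∈ ttGrade A i, ∃ y ∈ ttGrade A j, z = x ⊗ₜ[ℂ] y}

end DoubleTensorAlgebra
section SchroederHopfAlgebra

open scoped TensorProduct DirectSum
open PiTensorProduct

/-- Nontrivial Schröder trees (the single-leaf tree is identified with the unit). -/
def SchT : Type := {t : PTree // PTree.IsSchroder t ∧ t ≠ PTree.leaf}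

variable (A : Type*) [AddCommGroup A] [Module ℂ A]

/-- `W_S(A) = ⊕_t (H_S-basis tree t) ⊗ A^{⊗ deg t}`: the space of decorated Schröder
trees, `t` carrying `A^{⊗ numSectors t}` as decorations of its sectors. -/
noncomputable abbrev WSdec := ⨁ (t : SchT), (⨂[ℂ] (_ : Fin (PTree.numSectors t.1)), A)

/-- The Hopf algebra `H_S(A)` of decorated Schröder trees: since `H_S` is the free
noncommutative polynomial algebra on Schröder trees (with the single-leaf tree as unit),
`H_S(A) = ⊕_{n≥0} H_S(n) ⊗ A^{⊗n}` is the tensor algebra over the span of decorated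
Schröder trees. -/
noncomputable abbrev HSA := TensorAlgebra ℂ (WSdec A)

variable {A}

open Classical in
/-- The decorated Schröder tree `t ⊗ a_1⋯a_n ∈ H_S(A)` (with `w = [a_1,…,a_n]` the
decorations of the `n = numSectors t` sectors); the single-leaf tree gives the unit. -/
noncomputable def dTreeOf (t : PTree) (w : List A) : HSA A :=
  if ht : t = PTree.leaf then 1
  else if h : PTree.IsSchroder t then
    (TensorAlgebra.ι ℂ)
      (DirectSum.of (fun s : SchT => ⨂[ℂ] (_ : Fin (PTree.numSectors s.1)), A)
        ⟨t, h, ht⟩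
        (PiTensorProduct.tprod ℂ fun i => w.getD i 0))
  else 0

/-- The product in `H_S(A)` of a forest of decorated Schröder trees. -/
noncomputable def forestOf (F : PTree.DForest A) : HSA A :=
  (F.map fun d => dTreeOf d.1 d.2).prod

variable (A)

/-- The `n`-th piece of the grading of `H_S(A)`: the span of the (products of) decorated
forests of total degree `n`. -/
noncomputable def hsGrade (n : ℕ) : Submodule ℂ (HSA A) :=
  Submodule.span ℂ {x : HSA A | ∃ F : PTree.DForest A,
    PTree.GoodForest F ∧ (F.map fun d => PTree.numSectors d.1).sum = n ∧ x = forestOf F}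

/-- The span of elementary tensors `x ⊗ y` with `x` of degree `i` and `y` of degree `j`. -/
noncomputable def hsGradePair (i j : ℕ) : Submodule ℂ (HSA A ⊗[ℂ] HSA A) :=
  Submodule.span ℂ {z : HSA A ⊗[ℂ] HSA A |
    ∃ x ∈ hsGrade A i, ∃ y ∈ hsGrade A j, z = x ⊗ₜ[ℂ] y}

end SchroederHopfAlgebra

open scoped TensorProduct

namespace PTree

theorem induction {P : PTree → Prop} (h : ∀ cs, (∀ c ∈ cs, P c) → P (node cs)) (t : PTree) :
    P t :=
  PTree.rec (motive_1 := P) (motive_2 := fun cs => ∀ c ∈ cs, P c) h (by simp)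
    (fun _ _ h₁ h₂ => by simpa using ⟨h₁, h₂⟩) t

mutual
  /-- The paths of the leaves of a tree, from left to right. -/
  def leafPaths : PTree → List (List ℕ)
    | .node [] => [[]]
    | .node (c :: cs) => (leafPaths c).map (0 :: ·) ++ leafPathsFrom 1 cs
  /-- The paths of the leaves of a list of trees numbered from `k` on. -/
  def leafPathsFrom : ℕ → List PTree → List (List ℕ)
    | _, [] => []
    | k, c :: cs => (leafPaths c).map (k :: ·) ++ leafPathsFrom (k + 1) cs
end

theorem leafPaths_node {cs : List PTree} (h : cs ≠ []) :
    leafPaths (node cs) = leafPathsFrom 0 cs := by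
  cases cs with
  | nil => exact absurd rfl h
  | cons c cs => simp [leafPaths, leafPathsFrom]

theorem mem_leafPathsFrom (cs : List PTree) (k : ℕ) (p : List ℕ) :
    p ∈ leafPathsFrom k cs ↔
      ∃ i q c, p = (k + i) :: q ∧ cs[i]? = some c ∧ q ∈ leafPaths c := by
  induction cs generalizing k with
  | nil => simp [leafPathsFrom]
  | cons c cs ih =>
    simp only [leafPathsFrom, List.mem_append, List.mem_map, ih]
    constructor
    · rintro (⟨q, hq, rfl⟩ | ⟨i, q, d, rfl, hd, hq⟩)
      · exact ⟨0, q, c, by simp, by simp, hq⟩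
      · exact ⟨i + 1, q, d, by congr 1; omega, by simpa using hd, hq⟩
    · rintro ⟨i, q, d, rfl, hd, hq⟩
      cases i with
      | zero => left; simp at hd; subst hd; exact ⟨q, hq, by simp⟩
      | succ i => right; exact ⟨i, q, d, by congr 1; omega, by simpa using hd, hq⟩

theorem mem_leafPaths (t : PTree) (p : List ℕ) : p ∈ leafPaths t ↔ IsLeafAt t p := by
  induction t using PTree.induction generalizing p with
  | h cs ih =>
    by_cases hcs : cs = []
    · subst hcs
      cases p <;> simp [leafPaths, IsLeafAt, subtreeAt]
    rw [leafPaths_node hcs, mem_leafPathsFrom]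
    cases p with
    | nil => simp [IsLeafAt, subtreeAt, hcs]
    | cons j p =>
      constructor
      · rintro ⟨i, q, c, he, hc, hq⟩
        simp only [zero_add, List.cons.injEq] at he
        obtain ⟨rfl, rfl⟩ := he
        have := (ih c (List.mem_of_getElem? hc) p).1 hq
        simpa [IsLeafAt, subtreeAt, hc] using this
      · intro h
        simp only [IsLeafAt, subtreeAt, Option.bind_eq_some_iff] at h
        obtain ⟨c, hc, h⟩ := h
        exact ⟨j, p, c, by simp, hc, (ih c (List.mem_of_getElem? hc) p).2 h⟩

theorem nodup_leafPaths (t : PTree) : (leafPaths t).Nodup := by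
  induction t using PTree.induction with
  | h cs ih =>
    by_cases hcs : cs = []
    · subst hcs; simp [leafPaths]
    rw [leafPaths_node hcs]
    clear hcs
    generalize 0 = k
    induction cs generalizing k with
    | nil => simp [leafPathsFrom]
    | cons c cs ih' =>
      rw [leafPathsFrom, List.nodup_append]
      refine ⟨(ih c (by simp)).map (fun a b h => by simpa using h),
        ih' (fun d hd => ih d (by simp [hd])) (k + 1), ?_⟩
      intro a ha b hb hab
      obtain ⟨q, -, rfl⟩ := List.mem_map.1 ha
      obtain ⟨i, r, d, rfl, -, -⟩ := (mem_leafPathsFrom _ _ _).1 hb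
      simp only [List.cons.injEq] at hab
      omega

theorem card_leaves_eq_countP (t : PTree) (Q : List ℕ → Prop) [DecidablePred Q] :
    Nat.card {p : List ℕ // IsLeafAt t p ∧ Q p} = (leafPaths t).countP (fun p => Q p) := by
  have h : ∀ p, p ∈ ((leafPaths t).filter fun p => Q p).toFinset ↔ IsLeafAt t p ∧ Q p := by
    intro p; simp [mem_leafPaths]
  rw [List.countP_eq_length_filter, ← List.toFinset_card_of_nodup ((nodup_leafPaths t).filter _),
    ← Nat.card_eq_finsetCard]
  exact Nat.card_congr (Equiv.subtypeEquivRight fun p => (h p).symm)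

theorem numLeaves_eq_length (t : PTree) : numLeaves t = (leafPaths t).length := by
  have := card_leaves_eq_countP t (fun _ => True)
  simpa [numLeaves] using this

theorem length_leafPathsFrom (cs : List PTree) (k : ℕ) :
    (leafPathsFrom k cs).length = (cs.map numLeaves).sum := by
  induction cs generalizing k with
  | nil => simp [leafPathsFrom]
  | cons c cs ih => simp [leafPathsFrom, ih, numLeaves_eq_length]

theorem numLeaves_leaf : numLeaves leaf = 1 := by
  simp [numLeaves_eq_length, leafPaths]

theorem numLeaves_node {cs : List PTree} (h : cs ≠ []) :
    numLeaves (node cs) = (cs.map numLeaves).sum := by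
  rw [numLeaves_eq_length, leafPaths_node h, length_leafPathsFrom]

theorem numLeaves_pos (t : PTree) : 0 < numLeaves t := by
  induction t using PTree.induction with
  | h cs ih =>
    cases cs with
    | nil => simp [numLeaves_leaf]
    | cons c cs =>
      rw [numLeaves_node (by simp)]
      have := ih c (by simp)
      simp only [List.map_cons, List.sum_cons]; omega

theorem numSectors_add_one (t : PTree) : numSectors t + 1 = numLeaves t := by
  have := numLeaves_pos t
  unfold numSectors; omega

theorem length_le_sum_numLeaves (cs : List PTree) : cs.length ≤ (cs.map numLeaves).sum := by
  induction cs with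
  | nil => simp
  | cons c cs ih =>
    have := numLeaves_pos c
    simp only [List.length_cons, List.map_cons, List.sum_cons]; omega

theorem IsSchroder.two_le_numLeaves {t : PTree} (h : IsSchroder t) (ht : t ≠ PTree.leaf) :
    2 ≤ numLeaves t := by
  cases h with
  | leaf => exact absurd rfl ht
  | node cs h₂ h =>
    rw [numLeaves_node (by rintro rfl; simp at h₂)]
    exact h₂.trans (length_le_sum_numLeaves cs)

theorem IsSchroder.numSectors_eq_zero_iff {t : PTree} (h : IsSchroder t) :
    numSectors t = 0 ↔ t = PTree.leaf := by
  constructor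
  · intro h0
    by_contra ht
    have := h.two_le_numLeaves ht
    have := numSectors_add_one t
    omega
  · rintro rfl
    have := numSectors_add_one PTree.leaf
    rw [numLeaves_leaf] at this; omega

open Classical in
/-- The number of leaves in a list of leaf paths strictly to the left of the vertex `v`. -/
noncomputable def countLeft (L : List (List ℕ)) (v : List ℕ) : ℕ :=
  L.countP fun q => List.Lex (· < ·) q v ∧ ¬ v <+: q

theorem leavesBefore_eq (t : PTree) (v : List ℕ) :
    leavesBefore t v = countLeft (leafPaths t) v := by
  classical
  rw [leavesBefore, card_leaves_eq_countP, countLeft]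

theorem countLeft_append (L M : List (List ℕ)) (v : List ℕ) :
    countLeft (L ++ M) v = countLeft L v + countLeft M v := by
  simp [countLeft]

theorem countLeft_map_cons (L : List (List ℕ)) (k : ℕ) (v : List ℕ) :
    countLeft (L.map (k :: ·)) (k :: v) = countLeft L v := by
  simp [countLeft, List.countP_map, Function.comp_def, List.prefix_cons_iff]

theorem countLeft_map_cons_of_lt (L : List (List ℕ)) {k j : ℕ} (h : k < j) (v : List ℕ) :
    countLeft (L.map (k :: ·)) (j :: v) = L.length := by
  classical
  rw [countLeft, List.countP_map, List.countP_eq_length]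
  intro a _
  simp only [Function.comp_apply, decide_eq_true_eq]
  refine ⟨List.Lex.rel h, ?_⟩
  simp only [List.cons_prefix_cons]; omega

theorem countLeft_leafPathsFrom_of_lt (cs : List PTree) {k j : ℕ} (h : j < k) (v : List ℕ) :
    countLeft (leafPathsFrom k cs) (j :: v) = 0 := by
  classical
  rw [countLeft, List.countP_eq_zero]
  intro a ha
  obtain ⟨i, q, c, rfl, -, -⟩ := (mem_leafPathsFrom _ _ _).1 ha
  simp only [decide_eq_true_eq, not_and]
  intro hl
  cases hl <;> omega

theorem mem_verticesListAux (cs : List PTree) (k : ℕ) (p : List ℕ) :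
    p ∈ verticesListAux k cs ↔
      ∃ i q c, p = (k + i) :: q ∧ cs[i]? = some c ∧ q ∈ verticesList c := by
  induction cs generalizing k with
  | nil => simp [verticesListAux]
  | cons c cs ih =>
    simp only [verticesListAux, List.mem_append, List.mem_map, ih]
    constructor
    · rintro (⟨q, hq, rfl⟩ | ⟨i, q, d, rfl, hd, hq⟩)
      · exact ⟨0, q, c, by simp, by simp, hq⟩
      · exact ⟨i + 1, q, d, by congr 1; omega, by simpa using hd, hq⟩
    · rintro ⟨i, q, d, rfl, hd, hq⟩
      cases i with
      | zero => left; simp at hd; subst hd; exact ⟨q, hq, by simp⟩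
      | succ i => right; exact ⟨i, q, d, by congr 1; omega, by simpa using hd, hq⟩

theorem mem_verticesList_of_subtreeAt {t s : PTree} {p : List ℕ} (h : subtreeAt p t = some s) :
    p ∈ verticesList t := by
  induction p generalizing t with
  | nil => cases t; simp [verticesList]
  | cons i p ih =>
    cases t with
    | node cs =>
      simp only [subtreeAt, Option.bind_eq_some_iff] at h
      obtain ⟨c, hc, h⟩ := h
      rw [verticesList, List.mem_cons, mem_verticesListAux]
      exact .inr ⟨i, p, c, by simp, hc, ih h⟩

theorem mem_internalFinset (t : PTree) (p : List ℕ) : p ∈ internalFinset t ↔ IsInternalAt t p := by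
  simp only [internalFinset, List.mem_toFinset, List.mem_filter, decide_eq_true_eq,
    and_iff_right_iff_imp]
  rintro ⟨cs, h, -⟩
  exact mem_verticesList_of_subtreeAt h

theorem mem_cutsFinset (t : PTree) (c : Finset (List ℕ)) :
    c ∈ cutsFinset t ↔
      (∀ v ∈ c, IsInternalAt t v) ∧ ∀ v ∈ c, ∀ w ∈ c, v ≠ w → ¬ v <+: w := by
  simp [cutsFinset, Finset.subset_iff, mem_internalFinset]

theorem finite_setOf_isSchroder_numLeaves_le (m : ℕ) :
    {t : PTree | IsSchroder t ∧ numLeaves t ≤ m}.Finite := by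
  induction m with
  | zero =>
    convert Set.finite_empty
    ext t
    have := numLeaves_pos t
    simp; omega
  | succ m ih =>
    have : Finite {t : PTree | IsSchroder t ∧ numLeaves t ≤ m} := ih
    have hf := (List.finite_length_le {t : PTree | IsSchroder t ∧ numLeaves t ≤ m} (m + 1)).image
      (fun l => node (l.map Subtype.val))
    refine (hf.insert leaf).subset ?_
    rintro t ⟨ht, hm⟩
    cases ht with
    | leaf => simp
    | node cs h₂ h =>
      right
      have hne : cs ≠ [] := by rintro rfl; simp at h₂
      rw [numLeaves_node hne] at hm
      have hmem : ∀ c ∈ cs, c ∈ {t : PTree | IsSchroder t ∧ numLeaves t ≤ m} := by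
        intro c hc
        refine ⟨h c hc, ?_⟩
        obtain ⟨l₁, l₂, rfl⟩ := List.append_of_mem hc
        have h₁ := length_le_sum_numLeaves l₁
        have h₃ := length_le_sum_numLeaves l₂
        simp at hm h₂
        omega
      exact ⟨cs.pmap Subtype.mk hmem, by
        simpa using (length_le_sum_numLeaves cs).trans hm, by simp [List.map_pmap]⟩

theorem finite_setOf_isSchroder (n : ℕ) :
    {t : PTree | IsSchroder t ∧ numLeaves t = n + 1}.Finite :=
  (finite_setOf_isSchroder_numLeaves_le (n + 1)).subset fun _ h => ⟨h.1, h.2.le⟩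

/-- The finset of Schröder trees with `n + 1` leaves. -/
noncomputable def schroderFinset (n : ℕ) : Finset PTree := (finite_setOf_isSchroder n).toFinset

theorem mem_schroderFinset {n : ℕ} {t : PTree} :
    t ∈ schroderFinset n ↔ IsSchroder t ∧ numSectors t = n := by
  have := numSectors_add_one t
  simp only [schroderFinset, Set.Finite.mem_toFinset, Set.mem_ofPred_eq, and_congr_right_iff]
  omega

end PTree

/-- A tree together with an admissible cut: a trunk whose leaves carry the pruned subtrees
(a leaf of the trunk which is not a vertex of the cut carries the single-vertex tree). -/
inductive CutTree : Type
  | hang : PTree → CutTree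
  | node : List CutTree → CutTree

namespace CutTree

open PTree (IsSchroder IsInternalAt subtreeAt leaf numLeaves numSectors leafPaths leafPathsFrom
  countLeft)

theorem induction {P : CutTree → Prop} (hang : ∀ s, P (hang s))
    (node : ∀ cs, (∀ c ∈ cs, P c) → P (node cs)) (x : CutTree) : P x :=
  CutTree.rec (motive_1 := P) (motive_2 := fun cs => ∀ c ∈ cs, P c) hang node (by simp)
    (fun _ _ h₁ h₂ => by simpa using ⟨h₁, h₂⟩) x

mutual
  /-- The underlying uncut tree. -/
  def total : CutTree → PTree
    | .hang s => s
    | .node xs => .node (totals xs)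
  /-- The underlying uncut trees of a list. -/
  def totals : List CutTree → List PTree
    | [] => []
    | x :: xs => total x :: totals xs
end

mutual
  /-- The trunk of a cut tree. -/
  def trunk : CutTree → PTree
    | .hang _ => PTree.leaf
    | .node xs => .node (trunks xs)
  /-- The trunks of a list of cut trees. -/
  def trunks : List CutTree → List PTree
    | [] => []
    | x :: xs => trunk x :: trunks xs
end

mutual
  /-- The trees hanging at the leaves of the trunk, from left to right. -/
  def hanging : CutTree → List PTree
    | .hang s => [s]
    | .node xs => hangings xs
  /-- The trees hanging at the leaves of a list of trunks, from left to right. -/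
  def hangings : List CutTree → List PTree
    | [] => []
    | x :: xs => hanging x ++ hangings xs
end

open Classical in
mutual
  /-- The vertices of the cut from left to right. -/
  noncomputable def cut : CutTree → List (List ℕ)
    | .hang s => if s = PTree.leaf then [] else [[]]
    | .node xs => cutFrom 0 xs
  /-- The vertices of the cuts of a list of cut trees numbered from `k` on. -/
  noncomputable def cutFrom : ℕ → List CutTree → List (List ℕ)
    | _, [] => []
    | k, x :: xs => (cut x).map (k :: ·) ++ cutFrom (k + 1) xs
end

/-- Cut Schröder trees. -/
inductive IsGood : CutTree → Prop
  | hang (s : PTree) : IsSchroder s → IsGood (.hang s)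
  | node (xs : List CutTree) : 2 ≤ xs.length → (∀ x ∈ xs, IsGood x) → IsGood (.node xs)

theorem totals_eq_map (xs : List CutTree) : totals xs = xs.map total := by
  induction xs with
  | nil => rfl
  | cons x xs ih => simp [totals, ih]

theorem trunks_eq_map (xs : List CutTree) : trunks xs = xs.map trunk := by
  induction xs with
  | nil => rfl
  | cons x xs ih => simp [trunks, ih]

theorem hangings_eq_flatMap (xs : List CutTree) : hangings xs = xs.flatMap hanging := by
  induction xs with
  | nil => rfl
  | cons x xs ih => simp [hangings, ih]

theorem IsGood.isSchroder_total {x : CutTree} (h : IsGood x) : IsSchroder (total x) := by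
  induction h with
  | hang s hs => exact hs
  | node xs h₂ _ ih =>
    rw [total, totals_eq_map]
    exact .node _ (by simpa using h₂) (by simpa using ih)

theorem IsGood.isSchroder_trunk {x : CutTree} (h : IsGood x) : IsSchroder (trunk x) := by
  induction h with
  | hang s hs => exact .leaf
  | node xs h₂ _ ih =>
    rw [trunk, trunks_eq_map]
    exact .node _ (by simpa using h₂) (by simpa using ih)

theorem IsGood.isSchroder_of_mem_hanging {x : CutTree} (h : IsGood x) :
    ∀ s ∈ hanging x, IsSchroder s := by
  induction h with
  | hang s hs => simpa [hanging] using hs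
  | node xs h₂ _ ih =>
    simp only [hanging, hangings_eq_flatMap, List.mem_flatMap, forall_exists_index, and_imp]
    exact fun s x hx hs => ih x hx s hs

theorem IsGood.numLeaves_trunk {x : CutTree} (h : IsGood x) :
    numLeaves (trunk x) = (hanging x).length := by
  induction h with
  | hang s hs => simp [trunk, hanging, PTree.numLeaves_leaf]
  | node xs h₂ _ ih =>
    rw [trunk, trunks_eq_map, PTree.numLeaves_node (by rintro h; simp at h; simp [h] at h₂),
      hanging, hangings_eq_flatMap, List.length_flatMap, List.map_map]
    exact congrArg List.sum (List.map_congr_left ih)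

theorem IsGood.numLeaves_total {x : CutTree} (h : IsGood x) :
    numLeaves (total x) = ((hanging x).map numLeaves).sum := by
  induction h with
  | hang s hs => simp [total, hanging]
  | node xs h₂ _ ih =>
    rw [total, totals_eq_map, PTree.numLeaves_node (by rintro h; simp at h; simp [h] at h₂),
      hanging, hangings_eq_flatMap, List.map_flatMap, List.flatMap, List.sum_flatten, List.map_map,
      List.map_map]
    exact congrArg List.sum (List.map_congr_left ih)

theorem IsGood.hanging_ne_nil {x : CutTree} (h : IsGood x) : hanging x ≠ [] := by
  intro h'
  have := h.numLeaves_trunk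
  have := PTree.numLeaves_pos (trunk x)
  simp_all

theorem exists_head_of_mem_cutFrom {k : ℕ} {xs : List CutTree} {v : List ℕ}
    (h : v ∈ cutFrom k xs) : ∃ j p, v = j :: p ∧ k ≤ j := by
  induction xs generalizing k with
  | nil => simp [cutFrom] at h
  | cons x xs ih =>
    rw [cutFrom, List.mem_append, List.mem_map] at h
    rcases h with ⟨p, -, rfl⟩ | h
    · exact ⟨k, p, rfl, le_rfl⟩
    · obtain ⟨j, p, rfl, hj⟩ := ih h
      exact ⟨j, p, rfl, by omega⟩

theorem cons_mem_cutFrom_self {k : ℕ} {x : CutTree} {xs : List CutTree} {p : List ℕ} :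
    k :: p ∈ cutFrom k (x :: xs) ↔ p ∈ cut x := by
  rw [cutFrom, List.mem_append]
  constructor
  · rintro (h | h)
    · simpa using h
    · obtain ⟨j, q, h, hj⟩ := exists_head_of_mem_cutFrom h
      simp only [List.cons.injEq] at h; omega
  · intro h; left; simpa using h

theorem mem_cutFrom_succ {k : ℕ} {x : CutTree} {xs : List CutTree} {v : List ℕ} :
    v ∈ cutFrom (k + 1) xs ↔ v ∈ cutFrom k (x :: xs) ∧ ∃ j p, v = j :: p ∧ k < j := by
  rw [cutFrom, List.mem_append]
  constructor
  · intro h; exact ⟨.inr h, exists_head_of_mem_cutFrom h⟩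
  · rintro ⟨h | h, j, p, rfl, hj⟩
    · simp at h; omega
    · exact h

theorem nil_not_mem_cut_node (xs : List CutTree) : [] ∉ cut (.node xs) := by
  intro h
  obtain ⟨j, p, h, -⟩ := exists_head_of_mem_cutFrom (by rwa [cut] at h)
  simp at h

/-- The vertices of a cut are pairwise incomparable. -/
theorem not_prefix_of_mem_cut (x : CutTree) :
    ∀ v ∈ cut x, ∀ w ∈ cut x, v ≠ w → ¬ v <+: w := by
  induction x using CutTree.induction with
  | hang s =>
    intro v hv w hw hne
    rw [cut] at hv hw
    split_ifs at hv hw <;> simp_all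
  | node xs ih =>
    rw [cut]
    generalize 0 = k
    induction xs generalizing k with
    | nil => simp [cutFrom]
    | cons x xs ih' =>
      intro v hv w hw hne hp
      have ih'' := ih' (fun c hc => ih c (by simp [hc])) (k + 1)
      obtain ⟨i, p, rfl, hi⟩ := exists_head_of_mem_cutFrom hv
      obtain ⟨j, q, rfl, hj⟩ := exists_head_of_mem_cutFrom hw
      obtain ⟨rfl, hp'⟩ := List.cons_prefix_cons.1 hp
      rcases hi.eq_or_lt with rfl | hi
      · exact ih x (by simp) p (cons_mem_cutFrom_self.1 hv) q (cons_mem_cutFrom_self.1 hw)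
          (by simpa using hne) hp'
      · exact ih'' _ (mem_cutFrom_succ.2 ⟨hv, i, p, rfl, hi⟩) _
          (mem_cutFrom_succ.2 ⟨hw, i, q, rfl, hi⟩) hne hp

theorem nodup_cut (x : CutTree) : (cut x).Nodup := by
  induction x using CutTree.induction with
  | hang s => rw [cut]; split_ifs <;> simp
  | node xs ih =>
    rw [cut]
    generalize 0 = k
    induction xs generalizing k with
    | nil => simp [cutFrom]
    | cons x xs ih' =>
      rw [cutFrom, List.nodup_append]
      refine ⟨(ih x (by simp)).map (fun a b h => by simpa using h),
        ih' (fun c hc => ih c (by simp [hc])) (k + 1), ?_⟩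
      rintro a ha b hb rfl
      obtain ⟨q, -, rfl⟩ := List.mem_map.1 ha
      obtain ⟨j, p, h, hj⟩ := exists_head_of_mem_cutFrom hb
      simp only [List.cons.injEq] at h; omega

/-- A cut tree is determined by its underlying tree and its cut. -/
theorem eq_of_total_eq_of_cut_eq {x y : CutTree} (ht : total x = total y)
    (hc : ∀ v, v ∈ cut x ↔ v ∈ cut y) (hx : IsGood x) (hy : IsGood y) : x = y := by
  induction x using CutTree.induction generalizing y with
  | hang s =>
    cases hy with
    | hang s' _ => simp only [total] at ht; rw [ht]
    | node ys h₂ _ =>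
      exfalso
      refine nil_not_mem_cut_node ys ((hc []).1 ?_)
      simp only [total] at ht
      rw [cut, if_neg]
      · simp
      · rw [ht]; intro h; cases ys <;> simp_all [totals]
  | node xs ih =>
    cases hx with
    | node _ h₂ hxs =>
    cases hy with
    | hang s' _ =>
      exfalso
      refine nil_not_mem_cut_node xs ((hc []).2 ?_)
      simp only [total] at ht
      rw [cut, if_neg]
      · simp
      · rw [← ht]; intro h; cases xs <;> simp_all [totals]
    | node ys h₂' hys =>
      clear h₂ h₂'
      simp only [total, PTree.node.injEq] at ht
      simp only [cut] at hc
      congr 1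
      generalize 0 = k at hc
      induction xs generalizing k ys with
      | nil => cases ys <;> simp_all [totals]
      | cons x xs ih' =>
        cases ys with
        | nil => simp [totals] at ht
        | cons y ys =>
          simp only [totals, List.cons.injEq] at ht
          have h₁ : x = y := ih x (by simp) ht.1
            (fun v => by rw [← cons_mem_cutFrom_self (k := k) (xs := xs), hc,
              cons_mem_cutFrom_self]) (hxs x (by simp)) (hys y (by simp))
          have h₂ : xs = ys := ih' (fun c hc => ih c (by simp [hc]))
            (fun c hc => hxs c (by simp [hc])) ys (fun c hc => hys c (by simp [hc])) ht.2 (k + 1)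
            (fun v => by rw [mem_cutFrom_succ (x := x), hc, ← mem_cutFrom_succ])
          rw [h₁, h₂]

/-- Every antichain of internal vertices comes from a cut tree. -/
theorem exists_of_antichain {t : PTree} (ht : IsSchroder t) (P : List ℕ → Prop)
    (hi : ∀ v, P v → IsInternalAt t v) (ha : ∀ v w, P v → P w → v ≠ w → ¬ v <+: w) :
    ∃ x, IsGood x ∧ total x = t ∧ ∀ v, v ∈ cut x ↔ P v := by
  induction t using PTree.induction generalizing P with
  | h cs ih =>
    by_cases h0 : P []
    · refine ⟨.hang (.node cs), .hang _ ht, rfl, fun v => ?_⟩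
      have hne : PTree.node cs ≠ PTree.leaf := by
        obtain ⟨ds, h, hds⟩ := hi _ h0
        simp only [subtreeAt, Option.some.injEq, PTree.node.injEq] at h
        simpa [h] using hds
      rw [cut, if_neg hne, List.mem_singleton]
      constructor
      · rintro rfl; exact h0
      · intro hv
        by_contra hne
        exact ha _ _ h0 hv (Ne.symm hne) (List.nil_prefix)
    · cases ht with
      | leaf =>
        refine ⟨.hang PTree.leaf, .hang _ .leaf, rfl, fun v => ?_⟩
        rw [cut, if_pos rfl]
        simp only [List.not_mem_nil, false_iff]
        intro hv
        obtain ⟨ds, h, -⟩ := hi v hv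
        cases v with
        | nil => exact h0 hv
        | cons i v => simp [subtreeAt] at h
      | node _ h₂ hcs =>
        have key : ∀ (cs : List PTree) (k : ℕ) (P : List ℕ → Prop), (∀ c ∈ cs, IsSchroder c) →
            (∀ c ∈ cs, ∀ P : List ℕ → Prop, (∀ v, P v → IsInternalAt c v) →
              (∀ v w, P v → P w → v ≠ w → ¬ v <+: w) →
              ∃ x, IsGood x ∧ total x = c ∧ ∀ v, v ∈ cut x ↔ P v) →
            (∀ v, P v → ∃ i p c, v = (k + i) :: p ∧ cs[i]? = some c ∧ IsInternalAt c p) →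
            (∀ v w, P v → P w → v ≠ w → ¬ v <+: w) →
            ∃ xs, (∀ x ∈ xs, IsGood x) ∧ totals xs = cs ∧ ∀ v, v ∈ cutFrom k xs ↔ P v := by
          intro cs
          induction cs with
          | nil =>
            intro k P _ _ hi _
            refine ⟨[], by simp, rfl, fun v => ?_⟩
            simp only [cutFrom, List.not_mem_nil, false_iff]
            intro hv; obtain ⟨i, p, c, -, h, -⟩ := hi v hv; simp at h
          | cons c cs ihl =>
            intro k P hs hx hi ha
            obtain ⟨x, hxg, hxt, hxc⟩ := hx c (by simp) (fun p => P (k :: p))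
              (fun v hv => by
                obtain ⟨i, p, d, he, hd, h⟩ := hi _ hv
                simp only [List.cons.injEq] at he
                obtain rfl : i = 0 := by omega
                simp at hd
                rw [he.2, hd]; exact h)
              (fun v w hv hw hne hp => ha _ _ hv hw (by simpa using hne)
                (List.cons_prefix_cons.2 ⟨rfl, hp⟩))
            obtain ⟨xs, hxsg, hxst, hxsc⟩ := ihl (k + 1)
              (fun v => P v ∧ ∃ j p, v = j :: p ∧ k < j)
              (fun c hc => hs c (by simp [hc])) (fun c hc => hx c (by simp [hc]))
              (by
                rintro v ⟨hv, j, q, rfl, hj⟩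
                obtain ⟨i, p, d, he, hd, h⟩ := hi _ hv
                simp only [List.cons.injEq] at he
                obtain ⟨i, rfl⟩ : ∃ i', i = i' + 1 := ⟨i - 1, by omega⟩
                exact ⟨i, p, d, by rw [he.2]; congr 1; omega, by simpa using hd, h⟩)
              (fun v w hv hw => ha v w hv.1 hw.1)
            refine ⟨x :: xs, by simpa using ⟨hxg, hxsg⟩, by simp [totals, hxt, hxst], ?_⟩
            intro v
            rw [cutFrom, List.mem_append, hxsc, List.mem_map]
            constructor
            · rintro (⟨p, hp, rfl⟩ | h)
              · exact (hxc p).1 hp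
              · exact h.1
            · intro hv
              obtain ⟨i, p, d, rfl, -, -⟩ := hi _ hv
              rcases Nat.eq_zero_or_pos i with rfl | hpos
              · exact .inl ⟨p, (hxc p).2 hv, rfl⟩
              · exact .inr ⟨hv, _, _, rfl, by omega⟩
        obtain ⟨xs, hg, htot, hc⟩ := key cs 0 P hcs (fun c hc => ih c hc (hcs c hc)) (by
          intro v hv
          obtain ⟨ds, h, hds⟩ := hi v hv
          cases v with
          | nil => exact absurd hv h0
          | cons i v =>
            simp only [subtreeAt, Option.bind_eq_some_iff] at h
            obtain ⟨c, hc, h⟩ := h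
            exact ⟨i, v, c, by simp, hc, ds, h, hds⟩) ha
        refine ⟨.node xs, .node _ ?_ hg, by rw [total, htot], by rw [cut]; exact hc⟩
        rw [← htot, totals_eq_map] at h₂; simpa using h₂

/-- A cut tree is determined by its trunk and the trees hanging at its leaves. -/
theorem eq_of_trunk_eq_of_hanging_eq {x y : CutTree} (ht : trunk x = trunk y)
    (hh : hanging x = hanging y) (hx : IsGood x) (hy : IsGood y) : x = y := by
  induction x using CutTree.induction generalizing y with
  | hang s =>
    cases hy with
    | hang s' _ => simp only [hanging, List.cons.injEq, and_true] at hh; rw [hh]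
    | node ys h₂ _ => cases ys <;> simp_all [trunk, trunks]
  | node xs ih =>
    cases hx with
    | node _ h₂ hxs =>
    cases hy with
    | hang s' _ => cases xs <;> simp_all [trunk, trunks]
    | node ys h₂' hys =>
      clear h₂ h₂'
      simp only [trunk, PTree.node.injEq] at ht
      simp only [hanging] at hh
      congr 1
      induction xs generalizing ys with
      | nil => cases ys <;> simp_all [trunks]
      | cons x xs ih' =>
        cases ys with
        | nil => simp [trunks] at ht
        | cons y ys =>
          simp only [trunks, List.cons.injEq] at ht
          have hx := hxs x (by simp)
          have hy := hys y (by simp)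
          obtain ⟨h₁, h₂⟩ := List.append_inj hh
            (by rw [← hx.numLeaves_trunk, ← hy.numLeaves_trunk, ht.1])
          rw [ih x (by simp) ht.1 h₁ hx hy, ih' (fun c hc => ih c (by simp [hc]))
            (fun c hc => hxs c (by simp [hc])) ys
            (fun c hc => hys c (by simp [hc])) h₂ ht.2]

/-- Schröder trees can be hung at the leaves of any Schröder tree. -/
theorem exists_of_hanging {t : PTree} (ht : IsSchroder t) (h : List PTree)
    (hh : ∀ s ∈ h, IsSchroder s) (hl : h.length = numLeaves t) :
    ∃ x, IsGood x ∧ trunk x = t ∧ hanging x = h := by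
  induction ht generalizing h with
  | leaf =>
    rw [PTree.numLeaves_leaf, List.length_eq_one_iff] at hl
    obtain ⟨s, rfl⟩ := hl
    exact ⟨.hang s, .hang s (hh s (by simp)), rfl, rfl⟩
  | node cs h₂ hcs ih =>
    rw [PTree.numLeaves_node (by rintro rfl; simp at h₂)] at hl
    have key : ∃ xs, (∀ x ∈ xs, IsGood x) ∧ trunks xs = cs ∧ hangings xs = h := by
      clear h₂ hcs
      induction cs generalizing h with
      | nil =>
        simp only [List.map_nil, List.sum_nil, List.length_eq_zero_iff] at hl
        exact ⟨[], by simp, rfl, by simp [hangings, hl]⟩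
      | cons c cs ih' =>
        simp only [List.map_cons, List.sum_cons] at hl
        obtain ⟨x, hx, hxt, hxh⟩ := ih c (by simp) (h.take (numLeaves c))
          (fun s hs => hh s (List.mem_of_mem_take hs)) (by simp [hl])
        obtain ⟨xs, hxs, hxst, hxsh⟩ := ih' (fun d hd => ih d (by simp [hd]))
          (h.drop (numLeaves c)) (fun s hs => hh s (List.mem_of_mem_drop hs)) (by simp [hl])
        exact ⟨x :: xs, by simpa using ⟨hx, hxs⟩, by simp [trunks, hxt, hxst],
          by simp [hangings, hxh, hxsh]⟩
    obtain ⟨xs, hg, htr, hha⟩ := key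
    refine ⟨.node xs, .node _ ?_ hg, by rw [trunk, htr], by rw [hanging, hha]⟩
    rw [← htr, trunks_eq_map] at h₂; simpa using h₂

theorem foldl_replaceLeaf_map_cons (L : List (List ℕ)) (pre : List PTree) (t : PTree)
    (post : List PTree) :
    (L.map (pre.length :: ·)).foldl (fun s v => PTree.replaceLeaf v s)
        (.node (pre ++ t :: post)) =
      .node (pre ++ L.foldl (fun s v => PTree.replaceLeaf v s) t :: post) := by
  induction L generalizing t with
  | nil => rfl
  | cons v L ih => simp [PTree.replaceLeaf, ih]

/-- Replacing the subtrees at the vertices of the cut by leaves gives the trunk. -/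
theorem foldl_replaceLeaf_cut (x : CutTree) :
    (cut x).foldl (fun s v => PTree.replaceLeaf v s) (total x) = trunk x := by
  induction x using CutTree.induction with
  | hang s =>
    rw [cut, total, trunk]
    split_ifs with h
    · exact h
    · simp [PTree.replaceLeaf]
  | node xs ih =>
    rw [cut, total, trunk]
    suffices h : ∀ pre : List PTree,
        (cutFrom pre.length xs).foldl (fun s v => PTree.replaceLeaf v s)
          (.node (pre ++ totals xs)) = .node (pre ++ trunks xs) from h []
    induction xs with
    | nil => simp [cutFrom, totals, trunks]
    | cons x xs ih' =>
      intro pre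
      rw [cutFrom, totals, trunks, List.foldl_append, foldl_replaceLeaf_map_cons, ih x (by simp)]
      simpa using ih' (fun c hc => ih c (by simp [hc])) (pre ++ [trunk x])

/-- The leftmost branch meets the cut if and only if the leftmost hanging tree is nontrivial. -/
theorem exists_onLeftBranch_iff {x : CutTree} (hx : IsGood x) :
    (∃ v ∈ cut x, PTree.OnLeftBranch v) ↔ (hanging x).head? ≠ some PTree.leaf := by
  induction hx with
  | hang s hs =>
    rw [cut]
    split_ifs with h <;> simp [hanging, h, PTree.OnLeftBranch]
  | node xs h₂ hg ih =>
    cases xs with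
    | nil => simp at h₂
    | cons x xs =>
      have hne := (hg x (by simp)).hanging_ne_nil
      rw [hanging, hangings, List.head?_append_of_ne_nil _ hne, ← ih x (by simp), cut]
      constructor
      · rintro ⟨v, hv, hl⟩
        obtain ⟨j, p, rfl, -⟩ := exists_head_of_mem_cutFrom hv
        simp only [PTree.OnLeftBranch, List.length_cons, List.replicate_succ,
          List.cons.injEq] at hl
        obtain ⟨rfl, hl⟩ := hl
        exact ⟨p, cons_mem_cutFrom_self.1 hv, hl⟩
      · rintro ⟨p, hp, hl⟩
        refine ⟨0 :: p, cons_mem_cutFrom_self.2 hp, ?_⟩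
        simp only [PTree.OnLeftBranch, List.length_cons, List.replicate_succ, List.cons.injEq,
          true_and]
        exact hl

end CutTree

/-- The intervals of lengths `g` separated by single points, starting at `o`; an interval is
recorded as its starting point and its length. -/
def gapIntervals : ℕ → List ℕ → List (ℕ × ℕ)
  | _, [] => []
  | o, k :: g => (o, k) :: gapIntervals (o + k + 1) g

theorem le_fst_of_mem_gapIntervals {o : ℕ} {g : List ℕ} {a : ℕ × ℕ}
    (h : a ∈ gapIntervals o g) : o ≤ a.1 := by
  induction g generalizing o with
  | nil => simp [gapIntervals] at h
  | cons k g ih =>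
    rw [gapIntervals, List.mem_cons] at h
    rcases h with rfl | h
    · exact le_rfl
    · have := ih h; omega

theorem add_le_of_mem_gapIntervals {o : ℕ} {g : List ℕ} {a : ℕ × ℕ}
    (h : a ∈ gapIntervals o g) : a.1 + a.2 + 1 ≤ o + (g.map (· + 1)).sum := by
  induction g generalizing o with
  | nil => simp [gapIntervals] at h
  | cons k g ih =>
    rw [gapIntervals, List.mem_cons] at h
    simp only [List.map_cons, List.sum_cons]
    rcases h with rfl | h
    · simp only; omega
    · have := ih h; omega

/-- The index `i` lies in one of the intervals of lengths `g` starting at `o`. -/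
def Covered (o : ℕ) (g : List ℕ) (i : ℕ) : Prop :=
  ∃ a ∈ gapIntervals o g, a.1 ≤ i ∧ i < a.1 + a.2

theorem covered_cons {o k : ℕ} {g : List ℕ} {i : ℕ} :
    Covered o (k :: g) i ↔ (o ≤ i ∧ i < o + k) ∨ Covered (o + k + 1) g i := by
  simp [Covered, gapIntervals]

theorem Covered.le {o : ℕ} {g : List ℕ} {i : ℕ} (h : Covered o g i) : o ≤ i := by
  obtain ⟨a, ha, h, -⟩ := h
  exact (le_fst_of_mem_gapIntervals ha).trans h

theorem covered_succ_cons {o k : ℕ} {g : List ℕ} {i : ℕ} (h : o < i) :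
    Covered o ((k + 1) :: g) i ↔ Covered (o + 1) (k :: g) i := by
  rw [covered_cons, covered_cons, show o + (k + 1) + 1 = o + 1 + k + 1 by omega]
  refine or_congr_left ?_
  omega

/-- The lengths of the gaps of the predicate `p` among the `n` indices starting at `o`. -/
def gaps (p : ℕ → Bool) : ℕ → ℕ → List ℕ
  | _, 0 => [0]
  | o, n + 1 => if p o then 0 :: gaps p (o + 1) n else (gaps p (o + 1) n).modifyHead (· + 1)

theorem gaps_ne_nil (p : ℕ → Bool) (o n : ℕ) : gaps p o n ≠ [] := by
  induction n generalizing o with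
  | zero => simp [gaps]
  | succ n ih => rw [gaps]; split_ifs <;> simp [ih]

theorem gaps_succ (p : ℕ → Bool) (o n : ℕ) : ∃ k g, gaps p (o + 1) n = k :: g ∧
    gaps p o (n + 1) = if p o then 0 :: k :: g else (k + 1) :: g := by
  obtain ⟨k, g, h⟩ := List.exists_cons_of_ne_nil (gaps_ne_nil p (o + 1) n)
  exact ⟨k, g, h, by rw [gaps, h]; rfl⟩

theorem length_gaps (p : ℕ → Bool) (o n : ℕ) :
    (gaps p o n).length = ((List.range' o n).filter p).length + 1 := by
  induction n generalizing o with
  | zero => simp [gaps]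
  | succ n ih =>
    obtain ⟨k, g, h, h'⟩ := gaps_succ p o n
    have := ih (o + 1)
    rw [h] at this
    rw [h', List.range'_succ, List.filter_cons]
    split_ifs <;> simp_all

theorem sum_gaps (p : ℕ → Bool) (o n : ℕ) : ((gaps p o n).map (· + 1)).sum = n + 1 := by
  induction n generalizing o with
  | zero => simp [gaps]
  | succ n ih =>
    obtain ⟨k, g, h, h'⟩ := gaps_succ p o n
    have := ih (o + 1)
    rw [h] at this
    rw [h']
    simp only [List.map_cons, List.sum_cons] at this
    split_ifs <;> simp only [List.map_cons, List.sum_cons] <;> omega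

theorem covered_gaps (p : ℕ → Bool) {o n i : ℕ} (h₁ : o ≤ i) (h₂ : i < o + n) :
    p i = true ↔ ¬ Covered o (gaps p o n) i := by
  induction n generalizing o with
  | zero => omega
  | succ n ih =>
    obtain ⟨k, g, h, h'⟩ := gaps_succ p o n
    rw [h']
    rcases h₁.eq_or_lt with rfl | h₁
    · split_ifs with hp
      · simp only [hp, true_iff]
        rw [covered_cons]
        rintro (h | h)
        · omega
        · have := h.le; omega
      · rw [covered_cons]; simp [hp]
    · rw [ih (o := o + 1) h₁ (by omega), h, not_iff_not]
      split_ifs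
      · conv_rhs => rw [covered_cons]
        constructor
        · exact .inr
        · rintro (h | h)
          · omega
          · exact h
      · rw [covered_succ_cons h₁]

theorem gaps_eq_of_covered (p : ℕ → Bool) (o n : ℕ) (g : List ℕ) (hne : g ≠ [])
    (hs : (g.map (· + 1)).sum = n + 1)
    (h : ∀ i, o ≤ i → i < o + n → (p i = true ↔ ¬ Covered o g i)) : gaps p o n = g := by
  induction n generalizing o g with
  | zero =>
    cases g with
    | nil => exact absurd rfl hne
    | cons k g =>
      simp only [List.map_cons, List.sum_cons] at hs
      obtain rfl : k = 0 := by omega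
      cases g with
      | nil => rfl
      | cons k g => simp only [List.map_cons, List.sum_cons] at hs; omega
  | succ n ih =>
    cases g with
    | nil => exact absurd rfl hne
    | cons k g =>
      simp only [List.map_cons, List.sum_cons] at hs
      have ho := h o le_rfl (by omega)
      rw [covered_cons] at ho
      cases k with
      | zero =>
        rw [gaps, if_pos]
        · congr 1
          refine ih (o + 1) g (by rintro rfl; simp at hs) (by omega) fun i hi hi' => ?_
          rw [h i (by omega) (by omega), covered_cons, not_iff_not]
          constructor
          · rintro (h | h)
            · omega
            · exact h
          · exact .inr
        · rw [ho]
          rintro (h | h)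
          · omega
          · have := h.le; omega
      | succ k =>
        rw [gaps, if_neg, ih (o + 1) (k :: g) (by simp)
          (by simp only [List.map_cons, List.sum_cons]; omega)]
        · rfl
        · intro i hi hi'
          rw [h i (by omega) (by omega), covered_succ_cons hi]
        · rw [ho, not_not]; left; omega

theorem natRunsT_gaps (p : ℕ → Bool) (o n : ℕ) :
    natRunsT ((List.range' o n).filter fun i => !p i) =
      ((gapIntervals o (gaps p o n)).filter fun a => a.2 ≠ 0).map
        fun a => List.range' a.1 a.2 := by
  induction n generalizing o with
  | zero => simp [gaps, gapIntervals, natRunsT]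
  | succ n ih =>
    obtain ⟨k, g, h, h'⟩ := gaps_succ p o n
    have ih := ih (o + 1)
    rw [h] at ih
    rw [h', List.range'_succ, List.filter_cons]
    split_ifs with hp hp' hp'
    · simp [hp'] at hp
    · rw [natRunsT, ih]
      cases k with
      | zero =>
        rw [gapIntervals, gapIntervals, List.filter_cons_of_neg (by simp),
          List.filter_cons_of_pos (by simp), List.map_cons]
        simp only [Nat.zero_add, Nat.add_zero]
        rcases hL : (gapIntervals (o + 1 + 1) g).filter (fun a => a.2 ≠ 0) with _ | ⟨⟨i, j⟩, L⟩
        · rw [hL]; rfl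
        · rw [hL]
          have hm : (i, j) ∈ (gapIntervals (o + 1 + 1) g).filter (fun a => a.2 ≠ 0) := by
            rw [hL]; exact List.mem_cons_self
          rw [List.mem_filter] at hm
          have hi := le_fst_of_mem_gapIntervals hm.1
          simp only [decide_eq_true_eq] at hm hi
          obtain ⟨j, rfl⟩ := Nat.exists_eq_succ_of_ne_zero hm.2
          simp only [List.map_cons, Nat.succ_eq_add_one, List.range'_succ]
          rw [if_neg (by omega)]
          simp
      | succ k =>
        rw [gapIntervals, gapIntervals, List.filter_cons_of_pos (by simp),
          List.filter_cons_of_pos (by simp), List.map_cons, List.map_cons,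
          show o + 1 + (k + 1) + 1 = o + (k + 1 + 1) + 1 by omega]
        simp [List.range'_succ]
    · rw [ih]
      conv_rhs => rw [gapIntervals, List.filter_cons_of_neg (by simp)]
    · simp_all

namespace PTree

/-- The trees of a list together with the numbers of leaves to the left of them, shifted
by `o`. -/
noncomputable def locate : ℕ → List PTree → List (ℕ × PTree)
  | _, [] => []
  | o, s :: h => (o, s) :: locate (o + numLeaves s) h

theorem locate_append (o : ℕ) (h h' : List PTree) :
    locate o (h ++ h') = locate o h ++ locate (o + (h.map numLeaves).sum) h' := by
  induction h generalizing o with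
  | nil => simp [locate]
  | cons s h ih => simp [locate, ih, Nat.add_assoc]

theorem gapIntervals_map_numSectors (o : ℕ) (h : List PTree) :
    gapIntervals o (h.map numSectors) = (locate o h).map fun a => (a.1, numSectors a.2) := by
  induction h generalizing o with
  | nil => rfl
  | cons s h ih =>
    simp only [List.map_cons, gapIntervals, locate, ← ih, ← numSectors_add_one, Nat.add_assoc]

theorem le_fst_of_mem_locate {o : ℕ} {h : List PTree} {a : ℕ × PTree} (ha : a ∈ locate o h) :
    o ≤ a.1 := by
  have : (a.1, numSectors a.2) ∈ gapIntervals o (h.map numSectors) := by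
    rw [gapIntervals_map_numSectors]
    exact List.mem_map_of_mem ha
  exact le_fst_of_mem_gapIntervals this

theorem pairwise_locate (o : ℕ) (h : List PTree) :
    (locate o h).Pairwise fun a b => a.1 < b.1 := by
  induction h generalizing o with
  | nil => simp [locate]
  | cons s h ih =>
    rw [locate, List.pairwise_cons]
    refine ⟨fun a ha => ?_, ih _⟩
    have := le_fst_of_mem_locate ha
    have := numLeaves_pos s
    simp only; omega

end PTree

namespace CutTree

open PTree (IsSchroder IsInternalAt subtreeAt subtree! leaf numLeaves numSectors leafPaths
  leafPathsFrom countLeft leavesBefore locate sortCut)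

/-- The subtree at a path in a list of trees numbered from `k` on (junk value: a leaf). -/
def subtreeFrom (k : ℕ) (ts : List PTree) : List ℕ → PTree
  | [] => PTree.leaf
  | j :: p => ((ts[j - k]?).bind (subtreeAt p)).getD PTree.leaf

open Classical in
theorem map_cut_eq_locate {x : CutTree} (hx : IsGood x) (o : ℕ) :
    (cut x).map (fun v => (o + leavesBefore (total x) v, subtree! (total x) v)) =
      (locate o (hanging x)).filter fun a => a.2 ≠ PTree.leaf := by
  induction hx generalizing o with
  | hang s hs =>
    rw [cut, total, hanging, locate, locate]
    have : leavesBefore s [] = 0 := by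
      rw [PTree.leavesBefore_eq, PTree.countLeft, List.countP_eq_zero]
      simp
    split_ifs with h
    · simp [h]
    · simp [h, this, subtree!, subtreeAt]
  | node xs h₂ hg ih =>
    have key : ∀ (k o : ℕ), (cutFrom k xs).map (fun v =>
        (o + countLeft (leafPathsFrom k (totals xs)) v, subtreeFrom k (totals xs) v)) =
          (locate o (hangings xs)).filter fun a => a.2 ≠ PTree.leaf := by
      clear h₂
      induction xs with
      | nil => intro k o; simp [cutFrom, hangings, locate]
      | cons x xs ih' =>
        intro k o
        have hgx := hg x (by simp)
        rw [cutFrom, hangings, PTree.locate_append, List.filter_append, ← ih x (by simp),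
          ← hgx.numLeaves_total, List.map_append, List.map_map,
          ← ih' (fun c hc => hg c (by simp [hc])) (fun c hc => ih c (by simp [hc])) (k + 1)]
        congr 1
        · refine List.map_congr_left fun v _ => ?_
          simp only [Function.comp_apply, totals, leafPathsFrom, PTree.countLeft_append,
            PTree.countLeft_map_cons, PTree.leavesBefore_eq, subtreeFrom, Nat.sub_self]
          rw [PTree.countLeft_leafPathsFrom_of_lt _ (Nat.lt_succ_self k)]
          simp [subtree!]
        · refine List.map_congr_left fun v hv => ?_
          obtain ⟨j, p, rfl, hj⟩ := exists_head_of_mem_cutFrom hv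
          obtain ⟨i, rfl⟩ := Nat.exists_eq_add_of_le hj
          simp only [totals, leafPathsFrom, PTree.countLeft_append, subtreeFrom]
          rw [PTree.countLeft_map_cons_of_lt _ (by omega), PTree.numLeaves_eq_length,
            show k + 1 + i - k = i + 1 by omega, show k + 1 + i - (k + 1) = i by omega,
            List.getElem?_cons_succ, ← Nat.add_assoc]
    rw [cut, hanging, ← key 0, total]
    refine List.map_congr_left fun v hv => ?_
    obtain ⟨j, p, rfl, hj⟩ := exists_head_of_mem_cutFrom hv
    rw [PTree.leavesBefore_eq, PTree.leafPaths_node]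
    · simp [subtreeFrom, subtree!, subtreeAt]
    · rw [totals_eq_map]; rintro h; simp at h; simp [h] at h₂

theorem subtree!_ne_leaf {x : CutTree} (hx : IsGood x) {v : List ℕ} (hv : v ∈ cut x) :
    subtree! (total x) v ≠ PTree.leaf := by
  classical
  have h := map_cut_eq_locate hx 0
  have := List.mem_map_of_mem
    (f := fun v => (0 + leavesBefore (total x) v, subtree! (total x) v)) hv
  rw [h, List.mem_filter] at this
  simpa using this.2

theorem isInternalAt_of_mem_cut {x : CutTree} (hx : IsGood x) {v : List ℕ} (hv : v ∈ cut x) :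
    IsInternalAt (total x) v := by
  have h := subtree!_ne_leaf hx hv
  rw [subtree!] at h
  rcases h' : subtreeAt v (total x) with _ | s
  · simp [h'] at h
  · obtain ⟨cs⟩ := s
    refine ⟨cs, h', ?_⟩
    rintro rfl
    simp [h'] at h

theorem toFinset_cut_mem_cutsFinset {x : CutTree} (hx : IsGood x) :
    (cut x).toFinset ∈ PTree.cutsFinset (total x) := by
  rw [PTree.mem_cutsFinset]
  exact ⟨fun v hv => isInternalAt_of_mem_cut hx (by simpa using hv), fun v hv w hw =>
    not_prefix_of_mem_cut x v (by simpa using hv) w (by simpa using hw)⟩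

theorem sortCut_cut {x : CutTree} (hx : IsGood x) :
    sortCut (total x) (cut x).toFinset = cut x := by
  classical
  have hlt : (cut x).Pairwise fun v w => leavesBefore (total x) v < leavesBefore (total x) w := by
    have h := (PTree.pairwise_locate 0 (hanging x)).filter (fun a => a.2 ≠ PTree.leaf)
    rw [← map_cut_eq_locate hx 0, List.pairwise_map] at h
    simpa using h
  have hperm : (sortCut (total x) (cut x).toFinset).Perm (cut x) :=
    (List.mergeSort_perm _ _).trans
      ((List.toFinset_toList (nodup_cut x)))
  have hle : (sortCut (total x) (cut x).toFinset).Pairwise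
      fun v w => leavesBefore (total x) v ≤ leavesBefore (total x) w := by
    have := List.pairwise_mergeSort
      (le := fun v w => Nat.ble (leavesBefore (total x) v) (leavesBefore (total x) w))
      (by simp only [Nat.ble_eq]; intros; omega)
      (by simp only [Bool.or_eq_true, Nat.ble_eq]; intros; omega)
      (cut x).toFinset.toList
    simpa [sortCut] using this
  refine hperm.eq_of_pairwise (fun a b ha hb h₁ h₂ => ?_) hle (hlt.imp le_of_lt)
  have hnd : ((cut x).map (leavesBefore (total x))).Nodup :=
    List.pairwise_map.2 (hlt.imp ne_of_lt)
  exact List.inj_on_of_nodup_map hnd (hperm.subset ha) hb (le_antisymm h₁ h₂)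

theorem trunkTree_cut {x : CutTree} (hx : IsGood x) :
    PTree.trunkTree (total x) (cut x).toFinset = trunk x := by
  rw [PTree.trunkTree, sortCut_cut hx, foldl_replaceLeaf_cut]

theorem removedIdx_cut_iff {x : CutTree} (hx : IsGood x) (i : ℕ) :
    PTree.RemovedIdx (total x) (cut x).toFinset i ↔
      Covered 0 ((hanging x).map numSectors) i := by
  classical
  have h : ∀ P : ℕ × PTree → Prop, (∃ v ∈ cut x, P (leavesBefore (total x) v, subtree! (total x) v))
      ↔ ∃ a ∈ locate 0 (hanging x), a.2 ≠ PTree.leaf ∧ P a := by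
    intro P
    have h := map_cut_eq_locate hx 0
    have h' : (∃ a ∈ (cut x).map
        (fun v => (0 + leavesBefore (total x) v, subtree! (total x) v)), P a) ↔
        ∃ a ∈ (locate 0 (hanging x)).filter fun a => a.2 ≠ PTree.leaf, P a := by rw [h]
    simpa [and_assoc] using h'
  have h' := h fun a => a.1 ≤ i ∧ i < a.1 + numSectors a.2
  simp only [PTree.RemovedIdx, List.mem_toFinset, Covered, PTree.gapIntervals_map_numSectors,
    List.mem_map]
  rw [h']
  constructor
  · rintro ⟨a, ha, -, h⟩; exact ⟨_, ⟨a, ha, rfl⟩, h⟩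
  · rintro ⟨_, ⟨a, ha, rfl⟩, h⟩
    refine ⟨a, ha, ?_, h⟩
    intro hl
    have := PTree.numSectors_add_one a.2
    simp only at h
    rw [hl, PTree.numLeaves_leaf] at this
    rw [hl] at h
    omega

theorem IsGood.sum_hanging {x : CutTree} (hx : IsGood x) :
    (((hanging x).map numSectors).map (· + 1)).sum = numSectors (total x) + 1 := by
  rw [PTree.numSectors_add_one, hx.numLeaves_total, List.map_map]
  congr 1
  exact List.map_congr_left fun s _ => PTree.numSectors_add_one s

end CutTree

/-- The indicator function of a set of positions of a word, on natural numbers. -/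
def isPos {n : ℕ} (S : Finset (Fin n)) (i : ℕ) : Bool := decide (∃ j ∈ S, j.val = i)

theorem isPos_val {n : ℕ} (S : Finset (Fin n)) (j : Fin n) : isPos S j = true ↔ j ∈ S := by
  simp [isPos, Fin.val_inj]

theorem sort_eq_filter_finRange {n : ℕ} (S : Finset (Fin n)) :
    S.sort (· ≤ ·) = (List.finRange n).filter (· ∈ S) := by
  refine List.Perm.eq_of_pairwise (le := (· ≤ ·)) (fun a b _ _ h h' => le_antisymm h h')
    (Finset.pairwise_sort _ _) ?_ ?_
  · exact ((List.pairwise_lt_finRange n).imp fun h => le_of_lt h).filter _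
  · rw [List.perm_ext_iff_of_nodup (Finset.sort_nodup _ _) ((List.nodup_finRange n).filter _)]
    simp

theorem map_val_sort {n : ℕ} (S : Finset (Fin n)) :
    (S.sort (· ≤ ·)).map Fin.val = (List.range' 0 n).filter (isPos S) := by
  rw [sort_eq_filter_finRange, ← List.range_eq_range', ← List.map_coe_finRange_eq_range, List.filter_map]
  congr 1
  refine List.filter_congr fun j _ => ?_
  rw [Bool.eq_iff_iff, Function.comp_apply, isPos_val, decide_eq_true_eq]

theorem isPos_compl {n : ℕ} (S : Finset (Fin n)) {i : ℕ} (hi : i < n) :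
    isPos (Finset.univ \ S) i = !isPos S i := by
  have h := isPos_val (Finset.univ \ S) ⟨i, hi⟩
  have h' := isPos_val S ⟨i, hi⟩
  simp only [Finset.mem_sdiff, Finset.mem_univ, true_and, ← h'] at h
  rw [Bool.eq_iff_iff, h]
  simp

theorem map_val_sort_compl {n : ℕ} (S : Finset (Fin n)) :
    ((Finset.univ \ S).sort (· ≤ ·)).map Fin.val =
      (List.range' 0 n).filter fun i => !isPos S i := by
  rw [map_val_sort]
  refine List.filter_congr fun i hi => isPos_compl S ?_
  simp at hi
  exact hi

theorem map_get_sort {A : Type*} [Zero A] (l : List A) (S : Finset (Fin l.length)) :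
    (S.sort (· ≤ ·)).map l.get =
      ((List.range' 0 l.length).filter (isPos S)).map fun i => l.getD i 0 := by
  rw [← map_val_sort, List.map_map]
  refine List.map_congr_left fun j _ => ?_
  simp

theorem eq_of_gaps_isPos_eq {n : ℕ} {S T : Finset (Fin n)}
    (h : gaps (isPos S) 0 n = gaps (isPos T) 0 n) : S = T := by
  ext j
  have h₁ := covered_gaps (p := isPos S) (o := 0) (n := n) (i := j) (Nat.zero_le _) (by omega)
  have h₂ := covered_gaps (p := isPos T) (o := 0) (n := n) (i := j) (Nat.zero_le _) (by omega)
  rw [← isPos_val, ← isPos_val, h₁, h₂, h]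

theorem map_getD_range' {A : Type*} [Zero A] (l : List A) (o k : ℕ) (h : o + k ≤ l.length) :
    ((List.range' o k).map fun i => l.getD i 0) = (l.drop o).take k := by
  refine List.ext_getElem (by simp; omega) fun i h₁ h₂ => ?_
  simp only [List.length_map, List.length_range'] at h₁
  simp only [List.getElem_map, List.getElem_range', List.getElem_take, List.getElem_drop]
  rw [List.getD_eq_getElem _ _ (by omega)]
  simp

namespace PTree

/-- Adding a first tree to a list of trees. -/
def consEmbedding : PTree × List PTree ↪ List PTree where
  toFun q := q.1 :: q.2
  inj' a b h := by simpa [Prod.ext_iff] using h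

theorem consEmbedding_apply (s : PTree) (h : List PTree) : consEmbedding (s, h) = s :: h := rfl

/-- The lists of Schröder trees with prescribed numbers of sectors. -/
noncomputable def hangFinset : List ℕ → Finset (List PTree)
  | [] => {[]}
  | k :: g => (schroderFinset k ×ˢ hangFinset g).map consEmbedding

theorem mem_hangFinset {g : List ℕ} {h : List PTree} :
    h ∈ hangFinset g ↔ (∀ s ∈ h, IsSchroder s) ∧ h.map numSectors = g := by
  induction g generalizing h with
  | nil => cases h <;> simp [hangFinset]
  | cons k g ih =>
    rw [hangFinset, Finset.mem_map]
    cases h with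
    | nil => simp [consEmbedding_apply]
    | cons s h =>
      simp [ih, mem_schroderFinset, consEmbedding_apply]
      tauto

theorem prod_gapIntervals_eq_sum {R : Type*} [Semiring R] (f : ℕ → PTree → R) (o : ℕ)
    (g : List ℕ) :
    ((gapIntervals o g).map fun a => ∑ s ∈ schroderFinset a.2, f a.1 s).prod =
      ∑ h ∈ hangFinset g, ((locate o h).map fun a => f a.1 a.2).prod := by
  induction g generalizing o with
  | nil => simp [gapIntervals, hangFinset, locate]
  | cons k g ih =>
    rw [gapIntervals, hangFinset, List.map_cons, List.prod_cons, ih, Finset.sum_map,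
      Finset.sum_product, Finset.sum_mul_sum]
    refine Finset.sum_congr rfl fun s hs => Finset.sum_congr rfl fun h _ => ?_
    rw [mem_schroderFinset] at hs
    simp [consEmbedding_apply, locate, ← numSectors_add_one, hs.2, Nat.add_assoc]

end PTree

theorem list_prod_map_filter {α M : Type*} [Monoid M] (p : α → Bool) (f : α → M) (l : List α)
    (h : ∀ a ∈ l, p a = false → f a = 1) : ((l.filter p).map f).prod = (l.map f).prod := by
  induction l with
  | nil => rfl
  | cons a l ih =>
    have ih := ih fun b hb => h b (by simp [hb])
    cases hp : p a with
    | false => simp [hp, ih, h a (by simp) hp]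
    | true => simp [hp, ih]

section Words

variable {A : Type*} [AddCommGroup A] [Module ℂ A]

theorem dTreeOf_leaf (w : List A) : dTreeOf PTree.leaf w = 1 := by simp [dTreeOf]

theorem schroderFinset_zero : PTree.schroderFinset 0 = {PTree.leaf} := by
  ext t
  rw [PTree.mem_schroderFinset, Finset.mem_singleton]
  constructor
  · rintro ⟨h, h'⟩
    exact h.numSectors_eq_zero_iff.1 h'
  · rintro rfl
    have h : PTree.IsSchroder PTree.leaf := PTree.IsSchroder.leaf
    exact ⟨h, h.numSectors_eq_zero_iff.2 rfl⟩

/-- The sum of all decorated Schröder trees with a given decoration. -/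
noncomputable def schroderSum (l : List A) : HSA A :=
  ∑ t ∈ PTree.schroderFinset l.length, dTreeOf t l

theorem map_wordOf {ι : TT A →ₐ[ℂ] HSA A}
    (hι : ∀ l : List A, l ≠ [] →
      ι (wordOf l) = ∑ᶠ t ∈ {t : PTree | PTree.IsSchroder t ∧
        PTree.numLeaves t = l.length + 1}, dTreeOf t l) (l : List A) :
    ι (wordOf l) = schroderSum l := by
  rcases eq_or_ne l [] with rfl | hl
  · simp [wordOf, schroderSum, schroderFinset_zero, dTreeOf_leaf]
  · have h : {t : PTree | PTree.IsSchroder t ∧ PTree.numLeaves t = l.length + 1} =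
        ↑(PTree.schroderFinset l.length) := by
      ext t
      simp [PTree.mem_schroderFinset, ← PTree.numSectors_add_one]
    rw [hι l hl, schroderSum, h, finsum_mem_coe_finset]

theorem map_compElem {ι : TT A →ₐ[ℂ] HSA A} (hι : ∀ l : List A, ι (wordOf l) = schroderSum l)
    (l : List A) (S : Finset (Fin l.length)) :
    ι (compElem l S) = ∑ h ∈ PTree.hangFinset (gaps (isPos S) 0 l.length),
      ((PTree.locate 0 h).map fun a =>
        dTreeOf a.2 ((l.drop a.1).take (PTree.numSectors a.2))).prod := by
  rw [← PTree.prod_gapIntervals_eq_sum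
    (fun o s => dTreeOf s ((l.drop o).take (PTree.numSectors s))), compElem, sentenceOf,
    map_list_prod, map_val_sort_compl, natRunsT_gaps]
  simp only [List.map_map]
  rw [list_prod_map_filter]
  · congr 1
    refine List.map_congr_left fun a ha => ?_
    have h := add_le_of_mem_gapIntervals ha
    rw [sum_gaps] at h
    simp only [Function.comp_apply]
    rw [map_getD_range' _ _ _ (by omega), hι, schroderSum]
    have hlen : ((l.drop a.1).take a.2).length = a.2 := by simp; omega
    rw [hlen]
    refine Finset.sum_congr rfl fun s hs => ?_
    rw [(PTree.mem_schroderFinset.1 hs).2]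
  · intro a _ h
    simp at h
    simp [h, wordOf]

end Words

namespace CutTree

variable {A : Type*} [AddCommGroup A] [Module ℂ A]

theorem forestOf_trunkPart {x : CutTree} (hx : IsGood x) (w : List A)
    (S : Finset (Fin w.length))
    (h : gaps (isPos S) 0 w.length = (hanging x).map PTree.numSectors) :
    forestOf (PTree.trunkPart (total x, w) (cut x).toFinset) =
      dTreeOf (trunk x) ((S.sort (· ≤ ·)).map w.get) := by
  classical
  have hw : PTree.trunkWord (total x) (cut x).toFinset w = (S.sort (· ≤ ·)).map w.get := by
    rw [map_get_sort, PTree.trunkWord, List.range_eq_range']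
    congr 1
    refine List.filter_congr fun i hi => ?_
    simp only [List.mem_range'_1] at hi
    rw [Bool.eq_iff_iff, covered_gaps (isPos S) hi.1 hi.2, h, decide_eq_true_eq,
      removedIdx_cut_iff hx]
  rw [PTree.trunkPart]
  simp only [trunkTree_cut hx, hw]
  split_ifs with h'
  · rw [h', dTreeOf_leaf, forestOf, List.map_nil, List.prod_nil]
  · simp [forestOf]

theorem forestOf_prunePart {x : CutTree} (hx : IsGood x) (w : List A) :
    forestOf (PTree.prunePart (total x, w) (cut x).toFinset) =
      ((PTree.locate 0 (hanging x)).map fun a =>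
        dTreeOf a.2 ((w.drop a.1).take (PTree.numSectors a.2))).prod := by
  classical
  rw [← list_prod_map_filter (fun a => decide (a.2 ≠ PTree.leaf)), ← map_cut_eq_locate hx 0,
    forestOf, PTree.prunePart]
  · simp only [sortCut_cut hx, List.map_map]
    congr 1
    refine List.map_congr_left fun v _ => ?_
    simp
  · intro a _ h
    simp at h
    simp [h, dTreeOf_leaf]

end CutTree

namespace CutTree

variable {A : Type*} [AddCommGroup A] [Module ℂ A]

theorem sum_cuts_eq {ι : TT A →ₐ[ℂ] HSA A} (hι : ∀ l : List A, ι (wordOf l) = schroderSum l)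
    (l : List A) (Q : Finset (List ℕ) → Prop) (QS : Finset (Fin l.length) → Prop)
    [DecidablePred Q] [DecidablePred QS]
    (hQ : ∀ x, IsGood x → ∀ S : Finset (Fin l.length),
      gaps (isPos S) 0 l.length = (hanging x).map PTree.numSectors →
        (Q (cut x).toFinset ↔ QS S)) :
    ∑ t ∈ PTree.schroderFinset l.length, ∑ c ∈ (PTree.cutsFinset t).filter Q,
        forestOf (PTree.trunkPart (t, l) c) ⊗ₜ[ℂ] forestOf (PTree.prunePart (t, l) c) =
      ∑ S ∈ (Finset.univ : Finset (Finset (Fin l.length))).filter QS,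
        ι (subwordElem l S) ⊗ₜ[ℂ] ι (compElem l S) := by
  have hlen (S : Finset (Fin l.length)) : (gaps (isPos S) 0 l.length).length =
      ((S.sort (· ≤ ·)).map l.get).length + 1 := by
    rw [length_gaps, map_get_sort, List.length_map]
  have hR (S : Finset (Fin l.length)) : ι (subwordElem l S) ⊗ₜ[ℂ] ι (compElem l S) =
      ∑ q ∈ PTree.schroderFinset ((S.sort (· ≤ ·)).map l.get).length ×ˢ
        PTree.hangFinset (gaps (isPos S) 0 l.length),
        dTreeOf q.1 ((S.sort (· ≤ ·)).map l.get) ⊗ₜ[ℂ]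
          ((PTree.locate 0 q.2).map fun a =>
            dTreeOf a.2 ((l.drop a.1).take (PTree.numSectors a.2))).prod := by
    rw [map_compElem hι, subwordElem, hι, schroderSum, TensorProduct.sum_tmul,
      Finset.sum_product]
    exact Finset.sum_congr rfl fun t _ => TensorProduct.tmul_sum _ _ _
  simp only [hR]
  rw [Finset.sum_sigma', Finset.sum_sigma']
  symm
  set R := ((Finset.univ : Finset (Finset (Fin l.length))).filter QS).sigma fun S =>
    PTree.schroderFinset ((S.sort (· ≤ ·)).map l.get).length ×ˢ
        PTree.hangFinset (gaps (isPos S) 0 l.length) with hRdef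
  have hex : ∀ a ∈ R, ∃ x, IsGood x ∧ trunk x = a.2.1 ∧ hanging x = a.2.2 ∧
      gaps (isPos a.1) 0 l.length = (hanging x).map PTree.numSectors ∧ QS a.1 := by
    rintro ⟨S, t, h⟩ ha
    simp only [hRdef, Finset.mem_sigma, Finset.mem_filter, Finset.mem_univ, true_and,
      Finset.mem_product, PTree.mem_schroderFinset, PTree.mem_hangFinset] at ha
    obtain ⟨hS, ⟨ht, ht'⟩, hh, hh'⟩ := ha
    obtain ⟨x, hx, h₁, h₂⟩ := exists_of_hanging ht h hh (by
      rw [← PTree.numSectors_add_one, ht', ← hlen, ← hh', List.length_map])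
    exact ⟨x, hx, h₁, h₂, by rw [h₂, hh'], hS⟩
  have hsec {x : CutTree} (hx : IsGood x) {S : Finset (Fin l.length)}
      (h : gaps (isPos S) 0 l.length = (hanging x).map PTree.numSectors) :
      PTree.numSectors (total x) = l.length := by
    have h' := hx.sum_hanging
    rw [← h, sum_gaps] at h'
    omega
  choose x hx htr hha hga hqs using hex
  refine Finset.sum_bij (fun a ha => ⟨total (x a ha), (cut (x a ha)).toFinset⟩) ?_ ?_ ?_ ?_
  · intro a ha
    simp only [Finset.mem_sigma, Finset.mem_filter, PTree.mem_schroderFinset]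
    exact ⟨⟨(hx a ha).isSchroder_total, hsec (hx a ha) (hga a ha)⟩,
      toFinset_cut_mem_cutsFinset (hx a ha), (hQ _ (hx a ha) _ (hga a ha)).2 (hqs a ha)⟩
  · intro a ha b hb hab
    simp only [Sigma.mk.injEq, heq_eq_eq] at hab
    have hxy := eq_of_total_eq_of_cut_eq hab.1
      (fun v => by rw [← List.mem_toFinset, hab.2, List.mem_toFinset]) (hx a ha) (hx b hb)
    have h₁ : a.1 = b.1 := eq_of_gaps_isPos_eq (by rw [hga a ha, hga b hb, hxy])
    have h₂ : a.2.1 = b.2.1 := by rw [← htr a ha, ← htr b hb, hxy]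
    have h₃ : a.2.2 = b.2.2 := by rw [← hha a ha, ← hha b hb, hxy]
    exact Sigma.ext h₁ (heq_of_eq (Prod.ext h₂ h₃))
  · rintro ⟨t, c⟩ htc
    simp only [Finset.mem_sigma, Finset.mem_filter, PTree.mem_schroderFinset,
      PTree.mem_cutsFinset] at htc
    obtain ⟨⟨ht, htl⟩, ⟨hc₁, hc₂⟩, hQc⟩ := htc
    obtain ⟨y, hy, rfl, hyc⟩ := exists_of_antichain ht (· ∈ c) hc₁
      fun v w hv hw => hc₂ v hv w hw
    obtain rfl : (cut y).toFinset = c := by ext v; simp [hyc]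
    have hsum := hy.sum_hanging
    rw [htl] at hsum
    classical
    let S : Finset (Fin l.length) :=
      Finset.univ.filter fun i => ¬ Covered 0 ((hanging y).map PTree.numSectors) i
    have hS : gaps (isPos S) 0 l.length = (hanging y).map PTree.numSectors := by
      refine gaps_eq_of_covered _ _ _ _ (by simp [hy.hanging_ne_nil]) hsum fun i _ hi => ?_
      rw [isPos_val S ⟨i, by omega⟩]
      simp [S]
    have hyl : (hanging y).length = PTree.numSectors (trunk y) + 1 := by
      rw [PTree.numSectors_add_one, hy.numLeaves_trunk]
    have ha : (⟨S, trunk y, hanging y⟩ :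
        (_ : Finset (Fin l.length)) × (PTree × List PTree)) ∈ R := by
      simp only [hRdef, Finset.mem_sigma, Finset.mem_filter, Finset.mem_univ, true_and,
        Finset.mem_product, PTree.mem_schroderFinset, PTree.mem_hangFinset]
      refine ⟨(hQ y hy S hS).1 hQc, ⟨hy.isSchroder_trunk, ?_⟩,
        hy.isSchroder_of_mem_hanging, hS.symm⟩
      have := hlen S
      rw [hS, List.length_map] at this
      omega
    refine ⟨_, ha, ?_⟩
    have hxy : x _ ha = y := 
      eq_of_trunk_eq_of_hanging_eq (htr _ ha) (hha _ ha) (hx _ ha) hy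
    rw [hxy]
  · intro a ha
    rw [forestOf_trunkPart (hx a ha) l a.1 (hga a ha), forestOf_prunePart (hx a ha), htr, hha]

theorem exists_onLeftBranch_cut_iff {x : CutTree} (hx : IsGood x) {n : ℕ} (hn : n ≠ 0)
    {S : Finset (Fin n)} (h : gaps (isPos S) 0 n = (hanging x).map PTree.numSectors) :
    (∃ v ∈ (cut x).toFinset, PTree.OnLeftBranch v) ↔ ∀ j ∈ S, j.val ≠ 0 := by
  classical
  have h₁ : (∀ j ∈ S, j.val ≠ 0) ↔ ¬ isPos S 0 = true := by simp [isPos]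
  simp only [List.mem_toFinset]
  rw [exists_onLeftBranch_iff hx, h₁, not_iff_not]
  obtain ⟨n, rfl⟩ := Nat.exists_eq_succ_of_ne_zero hn
  obtain ⟨k, g, -, h'⟩ := gaps_succ (isPos S) 0 n
  rw [h'] at h
  have hs := fun s => hx.isSchroder_of_mem_hanging s
  rcases hh : hanging x with _ | ⟨s, H⟩
  · exact absurd hh hx.hanging_ne_nil
  · rw [hh] at h hs
    rw [List.head?_cons, Option.some_inj, ← (hs s (by simp)).numSectors_eq_zero_iff]
    split_ifs at h with h''
    · simp only [List.map_cons, List.cons.injEq] at h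
      simp [h'', ← h.1]
    · simp only [List.map_cons, List.cons.injEq] at h
      simp [h'', ← h.1]

end CutTree

theorem goodTree_of_mem_schroderFinset {A : Type*} {l : List A} (hl : l ≠ []) {t : PTree}
    (ht : t ∈ PTree.schroderFinset l.length) : PTree.GoodTree (t, l) := by
  rw [PTree.mem_schroderFinset] at ht
  refine ⟨ht.1, fun h => hl ?_, ht.2.symm⟩
  rw [← ht.1.numSectors_eq_zero_iff, ht.2] at h
  simpa using h

section Words

variable {A : Type*} [AddCommGroup A] [Module ℂ A]

theorem of_tprod_congr {k m : ℕ} (h : k = m) (f : Fin (k + 1) → A) (g : Fin (m + 1) → A)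
    (hfg : ∀ i : Fin (k + 1), f i = g (Fin.cast (by rw [h]) i)) :
    DirectSum.of (fun m => ⨂[ℂ] (_ : Fin (m + 1)), A) k (PiTensorProduct.tprod ℂ f) =
      DirectSum.of (fun m => ⨂[ℂ] (_ : Fin (m + 1)), A) m (PiTensorProduct.tprod ℂ g) := by
  subst h
  rw [show f = g from funext hfg]

theorem exists_wordOf_eq {m : ℕ} (f : Fin (m + 1) → A) : ∃ l : List A, l ≠ [] ∧ wordOf l =
    TensorAlgebra.ι ℂ (DirectSum.of (fun m => ⨂[ℂ] (_ : Fin (m + 1)), A) m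
      (PiTensorProduct.tprod ℂ f)) := by
  refine ⟨f 0 :: List.ofFn fun i => f (Fin.succ i), by simp, ?_⟩
  rw [wordOf, of_tprod_congr (List.length_ofFn) _ f]
  intro i
  refine Fin.cases ?_ (fun i => ?_) i
  · rfl
  · simp
    rfl

theorem algHom_ext_wordOf {B : Type*} [Semiring B] [Algebra ℂ B] {f g : TT A →ₐ[ℂ] B}
    (h : ∀ l : List A, l ≠ [] → f (wordOf l) = g (wordOf l)) (x : TT A) : f x = g x := by
  refine DFunLike.congr_fun (?_ : f = g) x
  refine TensorAlgebra.hom_ext (DirectSum.linearMap_ext _ fun m => PiTensorProduct.ext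
    (MultilinearMap.ext fun v => ?_))
  obtain ⟨l, hl, hv⟩ := exists_wordOf_eq v
  have := h l hl
  rw [hv] at this
  exact this

/-- The span of the decorated forests. -/
noncomputable def forestSpan (A : Type*) [AddCommGroup A] [Module ℂ A] : Submodule ℂ (HSA A) :=
  Submodule.span ℂ {y | ∃ F : PTree.DForest A, PTree.GoodForest F ∧ y = forestOf F}

theorem schroderSum_mul_mem_forestSpan {l : List A} (hl : l ≠ []) {y : HSA A}
    (hy : y ∈ forestSpan A) : schroderSum l * y ∈ forestSpan A := by
  rw [schroderSum, Finset.sum_mul]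
  refine Submodule.sum_mem _ fun t ht => ?_
  have hd := goodTree_of_mem_schroderFinset hl ht
  have : forestSpan A ≤ (forestSpan A).comap (LinearMap.mulLeft ℂ (dTreeOf t l)) := by
    rw [forestSpan, Submodule.span_le]
    rintro _ ⟨F, hF, rfl⟩
    refine Submodule.subset_span ⟨(t, l) :: F, ?_, by simp [forestOf]⟩
    rintro d hd'
    rcases List.mem_cons.1 hd' with rfl | hd'
    exacts [hd, hF d hd']
  exact this hy

theorem sentenceOf_cons (w : List A) (ws : List (List A)) :
    sentenceOf (w :: ws) = wordOf w * sentenceOf ws := by simp [sentenceOf]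

theorem map_sentenceOf_mem_forestSpan {ι : TT A →ₐ[ℂ] HSA A}
    (hι : ∀ l : List A, ι (wordOf l) = schroderSum l) (ws : List (List A))
    (hws : ∀ w ∈ ws, w ≠ []) : ι (sentenceOf ws) ∈ forestSpan A := by
  induction ws with
  | nil => exact Submodule.subset_span ⟨[], by simp [PTree.GoodForest], by simp [forestOf, sentenceOf]⟩
  | cons w ws ih =>
    rw [sentenceOf_cons, map_mul, hι]
    exact schroderSum_mul_mem_forestSpan (hws w (by simp)) (ih fun w hw => hws w (by simp [hw]))

theorem half_coproduct_map_sentenceOf {ι : TT A →ₐ[ℂ] HSA A}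
    (hι : ∀ l : List A, ι (wordOf l) = schroderSum l)
    {Δ : TT A →ₐ[ℂ] TT A ⊗[ℂ] TT A} {δ : HSA A →ₐ[ℂ] HSA A ⊗[ℂ] HSA A}
    (hδ : ∀ x, δ (ι x) = Algebra.TensorProduct.map ι ι (Δ x))
    {Δhalf : TT A →ₗ[ℂ] TT A ⊗[ℂ] TT A} {δhalf : HSA A →ₗ[ℂ] HSA A ⊗[ℂ] HSA A}
    (hΔmul : ∀ l : List A, l ≠ [] → ∀ ws : List (List A), (∀ w ∈ ws, w ≠ []) →
      Δhalf (wordOf l * sentenceOf ws) = Δhalf (wordOf l) * Δ (sentenceOf ws))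
    (hδmul : ∀ d : PTree × List A, PTree.GoodTree d →
      ∀ F : PTree.DForest A, PTree.GoodForest F →
        δhalf (dTreeOf d.1 d.2 * forestOf F) = δhalf (dTreeOf d.1 d.2) * δ (forestOf F))
    (hhalf : ∀ l : List A, l ≠ [] →
      δhalf (schroderSum l) = Algebra.TensorProduct.map ι ι (Δhalf (wordOf l)))
    (ws : List (List A)) (hne : ws ≠ []) (hws : ∀ w ∈ ws, w ≠ []) :
    δhalf (ι (sentenceOf ws)) =
      TensorProduct.map ι.toLinearMap ι.toLinearMap (Δhalf (sentenceOf ws)) := by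
  change _ = Algebra.TensorProduct.map ι ι (Δhalf (sentenceOf ws))
  cases ws with
  | nil => exact absurd rfl hne
  | cons w ws =>
    have hw := hws w (by simp)
    have hws' : ∀ w ∈ ws, w ≠ [] := fun w hw => hws w (by simp [hw])
    have key : forestSpan A ≤ LinearMap.eqLocus
        (δhalf ∘ₗ LinearMap.mulLeft ℂ (schroderSum w))
        (LinearMap.mulLeft ℂ (δhalf (schroderSum w)) ∘ₗ δ.toLinearMap) := by
      rw [forestSpan, Submodule.span_le]
      rintro _ ⟨F, hF, rfl⟩
      simp only [SetLike.mem_coe, LinearMap.mem_eqLocus, LinearMap.comp_apply,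
        LinearMap.mulLeft_apply, AlgHom.toLinearMap_apply, schroderSum, Finset.sum_mul, map_sum]
      exact Finset.sum_congr rfl fun t ht =>
        hδmul (t, w) (goodTree_of_mem_schroderFinset hw ht) F hF
    have h := key (map_sentenceOf_mem_forestSpan hι ws hws')
    simp only [LinearMap.mem_eqLocus, LinearMap.comp_apply,
        LinearMap.mulLeft_apply, AlgHom.toLinearMap_apply] at h
    rw [sentenceOf_cons, map_mul, hι, h, hΔmul w hw ws hws', map_mul, hδ, hhalf w hw]

theorem counit_dTreeOf {εS : HSA A →ₐ[ℂ] ℂ} (hεS : ∀ v : WSdec A, εS (TensorAlgebra.ι ℂ v) = 0)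
    {t : PTree} {l : List A} (h : PTree.GoodTree (t, l)) : εS (dTreeOf t l) = 0 := by
  rw [dTreeOf, dif_neg h.2.1, dif_pos h.1, hεS]

theorem counit_wordOf {ε : TT A →ₐ[ℂ] ℂ} (hε : ∀ v : TPlus A, ε (TensorAlgebra.ι ℂ v) = 0)
    {l : List A} (h : l ≠ []) : ε (wordOf l) = 0 := by
  cases l with
  | nil => exact absurd rfl h
  | cons x xs => rw [wordOf, hε]

end Words

/-- Let `A` be a `ℂ`-vector space and `ι : T(T_+(A)) → H_S(A)` the
algebra morphism with `ι(a_1⋯a_n) = Σ_{t ∈ ST(n)} t ⊗ a_1⋯a_n`. Then `ι` is a coalgebra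
morphism: `δ_A ∘ ι = (ι ⊗ ι) ∘ Δ` and `ε_A ∘ ι = ε`; moreover `ι` intertwines the
half-coproducts on the augmentation ideal: `δ_{≺,A} ∘ ι = (ι ⊗ ι) ∘ Δ_≺` and
`δ_{≻,A} ∘ ι = (ι ⊗ ι) ∘ Δ_≻`. Here all the structure maps are characterized by their
defining combinatorial formulas. -/
theorem iota_is_coalgebra_and_unshuffle_morphism
    (A : Type*) [AddCommGroup A] [Module ℂ A]
    -- the coproduct and counit of T(T_+(A))
    (Δ : TT A →ₐ[ℂ] TT A ⊗[ℂ] TT A)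
    (hΔ : ∀ l : List A, l ≠ [] →
      Δ (wordOf l) = ∑ S : Finset (Fin l.length), subwordElem l S ⊗ₜ[ℂ] compElem l S)
    (ε : TT A →ₐ[ℂ] ℂ) (hε : ∀ v : TPlus A, ε (TensorAlgebra.ι ℂ v) = 0)
    -- the half-coproducts Δ_≺ and Δ_≻ of T(T_+(A))
    (Δprec Δsucc : TT A →ₗ[ℂ] TT A ⊗[ℂ] TT A)
    (hΔprec : ∀ l : List A, l ≠ [] →
      Δprec (wordOf l) = ∑ S ∈ (Finset.univ : Finset (Finset (Fin l.length))).filter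
          (fun S => ∃ j ∈ S, j.val = 0), subwordElem l S ⊗ₜ[ℂ] compElem l S)
    (hΔsucc : ∀ l : List A, l ≠ [] →
      Δsucc (wordOf l) = ∑ S ∈ (Finset.univ : Finset (Finset (Fin l.length))).filter
          (fun S => ∀ j ∈ S, j.val ≠ 0), subwordElem l S ⊗ₜ[ℂ] compElem l S)
    (hΔprecMul : ∀ l : List A, l ≠ [] → ∀ ws : List (List A), (∀ w ∈ ws, w ≠ []) →
      Δprec (wordOf l * sentenceOf ws) = Δprec (wordOf l) * Δ (sentenceOf ws))
    (hΔsuccMul : ∀ l : List A, l ≠ [] → ∀ ws : List (List A), (∀ w ∈ ws, w ≠ []) →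
      Δsucc (wordOf l * sentenceOf ws) = Δsucc (wordOf l) * Δ (sentenceOf ws))
    -- the coproduct and counit of H_S(A)
    (δ : HSA A →ₐ[ℂ] HSA A ⊗[ℂ] HSA A)
    (hδ : ∀ (t : PTree) (w : List A), PTree.IsSchroder t → t ≠ PTree.leaf →
      w.length = PTree.numSectors t →
      δ (dTreeOf t w) = ∑ c ∈ PTree.cutsFinset t,
        forestOf (PTree.trunkPart (t, w) c) ⊗ₜ[ℂ] forestOf (PTree.prunePart (t, w) c))
    (εS : HSA A →ₐ[ℂ] ℂ) (hεS : ∀ v : WSdec A, εS (TensorAlgebra.ι ℂ v) = 0)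
    -- the half-coproducts δ_{≺,A} and δ_{≻,A} of H_S(A)
    (δprec δsucc : HSA A →ₗ[ℂ] HSA A ⊗[ℂ] HSA A)
    (hδprec : ∀ (t : PTree) (w : List A), PTree.IsSchroder t → t ≠ PTree.leaf →
      w.length = PTree.numSectors t →
      δprec (dTreeOf t w) = ∑ c ∈ PTree.cutsPrecFinset t,
        forestOf (PTree.trunkPart (t, w) c) ⊗ₜ[ℂ] forestOf (PTree.prunePart (t, w) c))
    (hδsucc : ∀ (t : PTree) (w : List A), PTree.IsSchroder t → t ≠ PTree.leaf →
      w.length = PTree.numSectors t →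
      δsucc (dTreeOf t w) = ∑ c ∈ PTree.cutsSuccFinset t,
        forestOf (PTree.trunkPart (t, w) c) ⊗ₜ[ℂ] forestOf (PTree.prunePart (t, w) c))
    (hδprecMul : ∀ d : PTree × List A, PTree.GoodTree d →
      ∀ F : PTree.DForest A, PTree.GoodForest F →
        δprec (dTreeOf d.1 d.2 * forestOf F) = δprec (dTreeOf d.1 d.2) * δ (forestOf F))
    (hδsuccMul : ∀ d : PTree × List A, PTree.GoodTree d →
      ∀ F : PTree.DForest A, PTree.GoodForest F →
        δsucc (dTreeOf d.1 d.2 * forestOf F) = δsucc (dTreeOf d.1 d.2) * δ (forestOf F))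
    -- the algebra morphism ι
    (ι : TT A →ₐ[ℂ] HSA A)
    (hι : ∀ l : List A, l ≠ [] →
      ι (wordOf l) = ∑ᶠ t ∈ {t : PTree | PTree.IsSchroder t ∧
        PTree.numLeaves t = l.length + 1}, dTreeOf t l) :
    -- conclusions: ι is a coalgebra morphism and intertwines the half-coproducts
    (∀ x : TT A, δ (ι x) = (Algebra.TensorProduct.map ι ι) (Δ x)) ∧
    (∀ x : TT A, εS (ι x) = ε x) ∧
    (∀ ws : List (List A), ws ≠ [] → (∀ w ∈ ws, w ≠ []) →
      δprec (ι (sentenceOf ws)) =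
        (TensorProduct.map ι.toLinearMap ι.toLinearMap) (Δprec (sentenceOf ws))) ∧
    (∀ ws : List (List A), ws ≠ [] → (∀ w ∈ ws, w ≠ []) →
      δsucc (ι (sentenceOf ws)) =
        (TensorProduct.map ι.toLinearMap ι.toLinearMap) (Δsucc (sentenceOf ws))) := by
  classical
  have hι := map_wordOf hι
  have hmap (x y : TT A) : Algebra.TensorProduct.map ι ι (x ⊗ₜ[ℂ] y) = ι x ⊗ₜ[ℂ] ι y :=
    Algebra.TensorProduct.map_tmul _ _ _ _
  have hcut {l : List A} (hl : l ≠ []) {d : HSA A →ₗ[ℂ] HSA A ⊗[ℂ] HSA A}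
      {C : PTree → Finset (Finset (List ℕ))}
      (hd : ∀ (t : PTree) (w : List A), PTree.IsSchroder t → t ≠ PTree.leaf →
        w.length = PTree.numSectors t → d (dTreeOf t w) = ∑ c ∈ C t,
          forestOf (PTree.trunkPart (t, w) c) ⊗ₜ[ℂ] forestOf (PTree.prunePart (t, w) c)) :
      d (schroderSum l) = ∑ t ∈ PTree.schroderFinset l.length, ∑ c ∈ C t,
        forestOf (PTree.trunkPart (t, l) c) ⊗ₜ[ℂ] forestOf (PTree.prunePart (t, l) c) := by
    rw [schroderSum, map_sum]
    refine Finset.sum_congr rfl fun t ht => ?_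
    obtain ⟨h₁, h₂, h₃⟩ := goodTree_of_mem_schroderFinset hl ht
    exact hd t l h₁ h₂ h₃
  have hcomp : ∀ x : TT A, δ (ι x) = Algebra.TensorProduct.map ι ι (Δ x) := by
    refine algHom_ext_wordOf (f := δ.comp ι) (g := (Algebra.TensorProduct.map ι ι).comp Δ)
      fun l hl => ?_
    have h := CutTree.sum_cuts_eq hι l (fun _ => True) (fun _ => True) (by simp)
    simp only [Finset.filter_true] at h
    rw [AlgHom.comp_apply, AlgHom.comp_apply, hι, hΔ l hl, map_sum]
    simp only [hmap]
    rw [← h]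
    exact hcut hl (d := δ.toLinearMap) hδ
  refine ⟨hcomp, ?_, ?_, ?_⟩
  · refine algHom_ext_wordOf (f := εS.comp ι) (g := ε) fun l hl => ?_
    rw [AlgHom.comp_apply, hι, counit_wordOf hε hl, schroderSum, map_sum]
    exact Finset.sum_eq_zero fun t ht =>
      counit_dTreeOf hεS (goodTree_of_mem_schroderFinset hl ht)
  · refine half_coproduct_map_sentenceOf hι hcomp hΔprecMul hδprecMul fun l hl => ?_
    rw [hcut hl hδprec, hΔprec l hl, map_sum]
    simp only [hmap]
    refine CutTree.sum_cuts_eq hι l _ _ fun x hx S hS => ?_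
    have h := CutTree.exists_onLeftBranch_cut_iff hx (by simpa using hl) hS
    rw [← not_iff_not]
    push Not
    exact h
  · refine half_coproduct_map_sentenceOf hι hcomp hΔsuccMul hδsuccMul fun l hl => ?_
    rw [hcut hl hδsucc, hΔsucc l hl, map_sum]
    simp only [hmap]
    exact CutTree.sum_cuts_eq hι l _ _ fun x hx S hS =>
      CutTree.exists_onLeftBranch_cut_iff hx (by simpa using hl) hS
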